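/- arXiv:2201.10699 — 2 statements merged into one kernel-verified Lean document; each statement's English description precedes it below -/
import Mathlib

section
/- Let H be a tree-degenerate bipartite graph with block representation (B_0, B_1, ..., B_m, P), let s = |B_0|. Then there exists a constant c_1 > 0 depending only on H such that for every graph G, t_H(G) ≥ c_1 · p_s(G)^{e(H)} ≥ c_1 · t_{K_2}(G)^{e(H)}. -/
/-- A block representation `(B₀, B₁, …, B_m, P)` of a tree-degenerate bipartite graph
`H`: the blocks `B i` are nonempty and partition `V(H)`; `B₁` is completely joined to
its parent set `P 1 = B₀`; for each `2 ≤ i ≤ m`, the block `B i` is completely joined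
to its parent set `P i`, a subset of an earlier block `B (γ i)` with `1 ≤ γ i < i` and
`|P (γ i)| ≤ |P i|`; and these joins account for all edges of `H`. -/
structure BlockRep {VH : Type} [Fintype VH] [DecidableEq VH]
    (H : SimpleGraph VH) (m : ℕ) where
  hm : 1 ≤ m
  B : Fin (m + 1) → Finset VH
  P : Fin (m + 1) → Finset VH
  γ : Fin (m + 1) → Fin (m + 1)
  B_nonempty : ∀ i, (B i).Nonempty
  partition : ∀ v : VH, ∃! i, v ∈ B i
  P_one : P 1 = B 0
  γ_lt : ∀ i : Fin (m + 1), 2 ≤ (i : ℕ) → 1 ≤ ((γ i : ℕ)) ∧ (γ i : ℕ) < (i : ℕ)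
  P_subset : ∀ i : Fin (m + 1), 2 ≤ (i : ℕ) → P i ⊆ B (γ i)
  P_card_mono : ∀ i : Fin (m + 1), 2 ≤ (i : ℕ) → (P (γ i)).card ≤ (P i).card
  adj_iff : ∀ u v : VH, H.Adj u v ↔
    ∃ i : Fin (m + 1), 1 ≤ (i : ℕ) ∧
      ((u ∈ P i ∧ v ∈ B i) ∨ (v ∈ P i ∧ u ∈ B i))

/-- The `r`-norm density `p_r(G) := ((∑_v d(v)^r)/n^{r+1})^{1/r}`. -/
noncomputable def rnormDensity {V : Type} [Fintype V] (G : SimpleGraph V)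
    [DecidableRel G.Adj] (r : ℕ) : ℝ :=
  ((∑ v : V, (G.degree v : ℝ) ^ r) / (Fintype.card V : ℝ) ^ (r + 1)) ^ ((r : ℝ)⁻¹)

/-- The homomorphism density `t_H(G) = h_H(G)/|V(G)|^{|V(H)|}`. -/
noncomputable def homDensity {α β : Type} [Fintype α] [Fintype β]
    (H : SimpleGraph α) (G : SimpleGraph β) : ℝ :=
  (Nat.card (H →g G) : ℝ) / (Fintype.card β : ℝ) ^ (Fintype.card α)

/-- The edge density `t_{K_2}(G) = 2e(G)/n²`. -/
noncomputable def edgeDensity' {β : Type} [Fintype β] (G : SimpleGraph β) : ℝ :=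
  2 * (Nat.card G.edgeSet : ℝ) / (Fintype.card β : ℝ) ^ 2

section TDHelpers


/-- Real-valued indicator of a proposition. -/
noncomputable def tdInd (q : Prop) : ℝ := by
  classical exact if q then 1 else 0

theorem tdInd_true {q : Prop} (h : q) : tdInd q = 1 := by simp [tdInd, h]

theorem tdInd_false {q : Prop} (h : ¬ q) : tdInd q = 0 := by simp [tdInd, h]

theorem tdInd_nonneg (q : Prop) : 0 ≤ tdInd q := by
  by_cases h : q
  · rw [tdInd_true h]; norm_num
  · rw [tdInd_false h]

theorem tdInd_and (q r : Prop) : tdInd (q ∧ r) = tdInd q * tdInd r := by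
  by_cases h : q <;> by_cases h' : r <;> simp [tdInd, h, h']

open Classical in
/-- Common neighbourhood of the image of `P`. -/
noncomputable def tdN {V W : Type} [Fintype W] (G : SimpleGraph W) (P : Finset V)
    (f : V → W) : Finset W :=
  Finset.univ.filter (fun w => ∀ u ∈ P, G.Adj (f u) w)

/-- Its density. -/
noncomputable def tdMu {V W : Type} [Fintype W] (G : SimpleGraph W) (P : Finset V)
    (f : V → W) : ℝ :=
  ((tdN G P f).card : ℝ) / (Fintype.card W : ℝ)

theorem tdMu_nonneg {V W : Type} [Fintype W] (G : SimpleGraph W) (P : Finset V)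
    (f : V → W) : 0 ≤ tdMu G P f := by
  unfold tdMu; positivity

theorem tdN_congr {V W : Type} [Fintype W] (G : SimpleGraph W) (P : Finset V)
    (f g : V → W) (h : ∀ v ∈ P, f v = g v) : tdN G P f = tdN G P g := by
  ext w
  simp only [tdN, Finset.mem_filter, Finset.mem_univ, true_and]
  constructor
  · intro H u hu; rw [← h u hu]; exact H u hu
  · intro H u hu; rw [h u hu]; exact H u hu

theorem tdMu_congr {V W : Type} [Fintype W] (G : SimpleGraph W) (P : Finset V)
    (f g : V → W) (h : ∀ v ∈ P, f v = g v) : tdMu G P f = tdMu G P g := by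
  unfold tdMu; rw [tdN_congr G P f g h]

theorem tdN_swap {V W : Type} [Fintype W] (G : SimpleGraph W) (P Q : Finset V)
    (f x : V → W) : (∀ v ∈ Q, x v ∈ tdN G P f) ↔ (∀ u ∈ P, f u ∈ tdN G Q x) := by
  simp only [tdN, Finset.mem_filter, Finset.mem_univ, true_and]
  constructor
  · intro h u hu v hv; exact (h v hv u hu).symm
  · intro h u hu v hv; exact (h v hv u hu).symm

open Finset BigOperators in
theorem td_resample {V W : Type} [Fintype V] [DecidableEq V] [Fintype W] [Nonempty W]
    (C : Finset V) (g : (V → W) → ℝ) :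
    𝔼 f : V → W, 𝔼 x : V → W, g (C.piecewise x f) = 𝔼 f : V → W, g f := by
  classical
  have hinv : Function.Involutive
      (fun q : (V → W) × (V → W) => (C.piecewise q.2 q.1, C.piecewise q.1 q.2)) := by
    intro q
    ext v <;> by_cases hv : v ∈ C <;> simp [hv]
  have h1 : ∑ q : (V → W) × (V → W), g (C.piecewise q.2 q.1)
      = ∑ q : (V → W) × (V → W), g q.1 :=
    Equiv.sum_comp hinv.toPerm (fun q : (V → W) × (V → W) => g q.1)
  rw [Fintype.sum_prod_type, Fintype.sum_prod_type] at h1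
  simp only [Fintype.expect_eq_sum_div_card, ← Finset.sum_div]
  rw [h1]
  simp only [Finset.sum_const, Finset.card_univ, nsmul_eq_mul, ← Finset.mul_sum]
  have : (Fintype.card (V → W) : ℝ) ≠ 0 := by
    exact_mod_cast Fintype.card_ne_zero
  field_simp

open Finset BigOperators in
theorem td_box {V W : Type} [Fintype V] [DecidableEq V] [Fintype W] [Nonempty W]
    (C : Finset V) (S : Finset W) :
    𝔼 f : V → W, tdInd (∀ v ∈ C, f v ∈ S)
      = ((S.card : ℝ) / (Fintype.card W : ℝ)) ^ C.card := by
  classical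
  have hn : (Fintype.card W : ℝ) ≠ 0 := by exact_mod_cast Fintype.card_ne_zero
  have h1 : ∑ f : V → W, tdInd (∀ v ∈ C, f v ∈ S)
      = ((Fintype.piFinset (fun v => if v ∈ C then S else Finset.univ)).card : ℝ) := by
    rw [Finset.card_eq_sum_ones, Nat.cast_sum, ← Finset.sum_filter_add_sum_filter_not Finset.univ
      (fun f : V → W => ∀ v ∈ C, f v ∈ S)]
    rw [Finset.sum_congr rfl (g := fun _ => (1:ℝ)) (s₂ := Finset.univ.filter
      (fun f : V → W => ∀ v ∈ C, f v ∈ S))]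
    · rw [Finset.sum_eq_zero (s := Finset.univ.filter (fun f : V → W => ¬ ∀ v ∈ C, f v ∈ S))]
      · simp only [add_zero, Nat.cast_one]
        apply Finset.sum_congr _ (fun _ _ => rfl)
        ext f
        simp only [Finset.mem_filter, Finset.mem_univ, true_and, Fintype.mem_piFinset]
        refine forall_congr' fun v => ?_
        by_cases hv : v ∈ C <;> simp [hv]
      · intro f hf
        exact tdInd_false (Finset.mem_filter.1 hf).2
    · intro f hf
      exact tdInd_true (Finset.mem_filter.1 hf).2
  rw [Fintype.expect_eq_sum_div_card, h1, Fintype.card_piFinset, Fintype.card_fun]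
  push_cast
  rw [← Finset.card_univ (α := V), ← Finset.prod_const, ← Finset.prod_div_distrib,
    ← Finset.prod_const]
  rw [← Finset.prod_subset (Finset.subset_univ C)]
  · exact Finset.prod_congr rfl fun v hv => by simp [hv]
  · intro v _ hv
    simp [hv, hn]

open Finset BigOperators in
theorem td_factor {V W : Type} [Fintype V] [DecidableEq V] [Fintype W] [Nonempty W]
    (C : Finset V) (S : Finset W) (h : (V → W) → ℝ)
    (hh : ∀ f x, h (C.piecewise x f) = h f) :
    𝔼 f : V → W, tdInd (∀ v ∈ C, f v ∈ S) * h f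
      = ((S.card : ℝ) / (Fintype.card W : ℝ)) ^ C.card * 𝔼 f : V → W, h f := by
  rw [← td_resample C, ← td_box C S, mul_comm, Finset.expect_mul]
  refine Finset.expect_congr rfl fun f _ => ?_
  rw [Finset.mul_expect]
  refine Finset.expect_congr rfl fun x _ => ?_
  rw [hh, mul_comm]
  congr 2
  refine propext (forall₂_congr fun v hv => ?_)
  simp [hv]

open Finset BigOperators in
/-- Bad tuples. -/
noncomputable def tdBad {V W : Type} [Fintype V] [DecidableEq V] [Fintype W]
    {H : SimpleGraph V} {m : ℕ} (R : BlockRep H m) (G : SimpleGraph W) (p : ℝ) (ε : ℕ → ℝ)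
    (i : Fin (m + 1)) (f : V → W) : Prop :=
  tdMu G (R.P i) f < ε i * p ^ (R.P i).card ∨
  ∃ k : Fin (m + 1), ∃ _ : (i : ℕ) < (k : ℕ), 2 ≤ (k : ℕ) ∧ R.γ k = i ∧
    tdMu G (R.P i) f ^ (R.P k).card < 2 * ((m : ℝ) + 1) *
      𝔼 x : V → W, tdInd (∀ v ∈ R.P k, x v ∈ tdN G (R.P i) f) * tdInd (tdBad R G p ε k x)
termination_by (m + 1 - (i : ℕ))
decreasing_by omega

theorem tdBad_congr {V W : Type} [Fintype V] [DecidableEq V] [Fintype W]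
    {H : SimpleGraph V} {m : ℕ} (R : BlockRep H m) (G : SimpleGraph W) (p : ℝ) (ε : ℕ → ℝ)
    (i : Fin (m + 1)) (f g : V → W) (h : ∀ v ∈ R.P i, f v = g v) :
    tdBad R G p ε i f ↔ tdBad R G p ε i g := by
  rw [tdBad.eq_def R G p ε i f, tdBad.eq_def R G p ε i g, tdMu_congr G _ f g h,
    tdN_congr G _ f g h]

theorem td_P_pos {V : Type} [Fintype V] [DecidableEq V]
    {H : SimpleGraph V} {m : ℕ} (R : BlockRep H m) :
    ∀ i : Fin (m + 1), 1 ≤ (i : ℕ) → 1 ≤ (R.P i).card := by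
  intro i
  induction i using WellFoundedLT.induction with
  | ind i ih =>
    intro hi
    by_cases h2 : 2 ≤ (i : ℕ)
    · obtain ⟨ha, hb⟩ := R.γ_lt i h2
      exact (ih _ hb ha).trans (R.P_card_mono i h2)
    · have hm := R.hm
      have : i = 1 := by
        apply Fin.ext
        rw [Fin.val_one', Nat.mod_eq_of_lt (by omega)]
        omega
      rw [this, R.P_one]
      exact (R.B_nonempty 0).card_pos

theorem td_P_sub {V : Type} [Fintype V] [DecidableEq V]
    {H : SimpleGraph V} {m : ℕ} (R : BlockRep H m) (i : Fin (m + 1)) (hi : 1 ≤ (i : ℕ)) :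
    ∃ j : Fin (m + 1), (j : ℕ) < i ∧ R.P i ⊆ R.B j := by
  by_cases h2 : 2 ≤ (i : ℕ)
  · exact ⟨R.γ i, (R.γ_lt i h2).2, R.P_subset i h2⟩
  · have hm := R.hm
    have : i = 1 := by
      apply Fin.ext
      rw [Fin.val_one', Nat.mod_eq_of_lt (by omega)]
      omega
    refine ⟨0, by rw [Fin.val_zero]; omega, ?_⟩
    rw [this, R.P_one]

theorem td_B_disj {V : Type} [Fintype V] [DecidableEq V]
    {H : SimpleGraph V} {m : ℕ} (R : BlockRep H m) (i j : Fin (m + 1)) (v : V)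
    (hi : v ∈ R.B i) (hj : v ∈ R.B j) : i = j :=
  (R.partition v).unique hi hj

open Finset BigOperators in
theorem td_bad_bound {V W : Type} [Fintype V] [DecidableEq V] [Fintype W] [Nonempty W]
    {H : SimpleGraph V} {m : ℕ} (R : BlockRep H m) (G : SimpleGraph W) (p : ℝ) (hp : 0 < p)
    (ε : ℕ → ℝ) (hε : ∀ i, 0 < ε i) (hε1 : ∀ i, ε i ≤ 1)
    (hεk : ∀ i k : ℕ, i < k → ∀ a, a ≤ Fintype.card V →
      ((m : ℝ) + 1) * (2 * ((m : ℝ) + 1)) * (2 * ε k) ≤ ε i ^ a * ε i) :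
    ∀ i : Fin (m + 1), 1 ≤ (i : ℕ) → ∀ r, 1 ≤ r → r ≤ (R.P i).card →
      𝔼 f : V → W, tdInd (tdBad R G p ε i f) * tdMu G (R.P i) f ^ r
        ≤ 2 * ε i * p ^ ((R.P i).card * r) := by
  classical
  intro i
  induction i using WellFoundedGT.induction with
  | ind i ih =>
    intro hi r hr1 hr
    set t := (R.P i).card with ht
    set a := ε i * p ^ t with ha
    have hapos : 0 < a := mul_pos (hε i) (pow_pos hp _)
    set ch := Finset.univ.filter
      (fun k : Fin (m + 1) => (i : ℕ) < (k : ℕ) ∧ 2 ≤ (k : ℕ) ∧ R.γ k = i) with hch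
    set E : Fin (m + 1) → (V → W) → ℝ := fun k f =>
      𝔼 x : V → W, tdInd (∀ v ∈ R.P k, x v ∈ tdN G (R.P i) f) * tdInd (tdBad R G p ε k x) with hE
    have hE0 : ∀ k f, 0 ≤ E k f := fun k f =>
      Finset.expect_nonneg fun x _ => mul_nonneg (tdInd_nonneg _) (tdInd_nonneg _)
    have hm0 : (0:ℝ) < (m : ℝ) + 1 := by positivity
    have hcard : ∀ k ∈ ch, t ≤ (R.P k).card := by
      intro k hk
      obtain ⟨-, h1, h2, h3⟩ := Finset.mem_filter.1 hk
      have := R.P_card_mono k h2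
      rwa [h3] at this
    have hpt : ∀ f : V → W, tdInd (tdBad R G p ε i f) * tdMu G (R.P i) f ^ r
        ≤ a ^ r + ∑ k ∈ ch, (2 * ((m : ℝ) + 1) / a ^ ((R.P k).card - r)) * E k f := by
      intro f
      have hterm : ∀ k ∈ ch, 0 ≤ (2 * ((m : ℝ) + 1) / a ^ ((R.P k).card - r)) * E k f :=
        fun k _ => mul_nonneg (by positivity) (hE0 k f)
      have hsum := Finset.sum_nonneg hterm
      have hmu := tdMu_nonneg G (R.P i) f
      by_cases hb : tdBad R G p ε i f
      · rw [tdInd_true hb, one_mul]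
        by_cases hlow : tdMu G (R.P i) f < a
        · have := pow_le_pow_left₀ hmu hlow.le r
          linarith
        · rw [tdBad.eq_def] at hb
          rcases hb with hb | ⟨k, hk1, hk2, hk3, hk4⟩
          · exact absurd hb hlow
          · have hk : k ∈ ch := Finset.mem_filter.2 ⟨Finset.mem_univ _, hk1, hk2, hk3⟩
            have hs := Finset.single_le_sum hterm hk
            have hru : r ≤ (R.P k).card := hr.trans (hcard k hk)
            have : tdMu G (R.P i) f ^ r
                ≤ (2 * ((m : ℝ) + 1) / a ^ ((R.P k).card - r)) * E k f := by
              rw [div_mul_eq_mul_div, le_div_iff₀ (by positivity)]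
              calc tdMu G (R.P i) f ^ r * a ^ ((R.P k).card - r)
                  ≤ tdMu G (R.P i) f ^ r * tdMu G (R.P i) f ^ ((R.P k).card - r) := by
                    gcongr
                    exact not_lt.1 hlow
                _ = tdMu G (R.P i) f ^ (R.P k).card := by
                    rw [← pow_add]; congr 1; omega
                _ ≤ _ := hk4.le
            have : 0 ≤ a ^ r := by positivity
            linarith
      · rw [tdInd_false hb, zero_mul]
        positivity
    have hEE : ∀ k ∈ ch, 𝔼 f : V → W, E k f ≤ 2 * ε k * p ^ ((R.P k).card * t) := by
      intro k hk
      obtain ⟨-, h1, h2, h3⟩ := Finset.mem_filter.1 hk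
      have := ih k h1 (by omega) t (td_P_pos R i hi) (hcard k hk)
      refine le_trans (le_of_eq ?_) this
      rw [hE, Finset.expect_comm]
      refine Finset.expect_congr rfl fun x _ => ?_
      rw [← Finset.expect_mul, mul_comm]
      congr 1
      simp only [tdN_swap G (R.P i) (R.P k)]
      exact td_box _ _
    calc 𝔼 f : V → W, tdInd (tdBad R G p ε i f) * tdMu G (R.P i) f ^ r
        ≤ 𝔼 f : V → W, (a ^ r + ∑ k ∈ ch, (2 * ((m : ℝ) + 1) / a ^ ((R.P k).card - r)) * E k f) :=
          Finset.expect_le_expect fun f _ => hpt f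
      _ = a ^ r + ∑ k ∈ ch, (2 * ((m : ℝ) + 1) / a ^ ((R.P k).card - r)) * 𝔼 f : V → W, E k f := by
          rw [Finset.expect_add_distrib, Fintype.expect_const, Finset.expect_sum_comm]
          simp only [Finset.mul_expect]
      _ ≤ ε i * p ^ (t * r) + ∑ k ∈ ch, (ε i * p ^ (t * r)) / ((m : ℝ) + 1) := by
          gcongr with k hk
          · rw [ha, mul_pow, ← pow_mul]
            gcongr
            exact pow_le_of_le_one (hε i).le (hε1 i) (by omega)
          · have hru : r ≤ (R.P k).card := hr.trans (hcard k hk)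
            refine (mul_le_mul_of_nonneg_left (hEE k hk) (by positivity)).trans ?_
            have hexp : p ^ ((R.P k).card * t) = p ^ (t * ((R.P k).card - r)) * p ^ (t * r) := by
              rw [← pow_add, ← mul_add]
              congr 1
              rw [mul_comm, Nat.sub_add_cancel hru]
            have hkk := hεk i k (Finset.mem_filter.1 hk).2.1 ((R.P k).card - r)
              ((Nat.sub_le _ _).trans (Finset.card_le_univ _))
            rw [hexp, ha, mul_pow, ← pow_mul, div_mul_eq_mul_div, div_le_div_iff₀
              (mul_pos (pow_pos (hε i) _) (pow_pos hp _)) hm0]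
            have hq : 0 ≤ p ^ (t * ((R.P k).card - r)) * p ^ (t * r) := by positivity
            have := mul_le_mul_of_nonneg_right hkk hq
            calc _ = ((m : ℝ) + 1) * (2 * ((m : ℝ) + 1)) * (2 * ε k) *
                  (p ^ (t * ((R.P k).card - r)) * p ^ (t * r)) := by ring
              _ ≤ _ := this
              _ = _ := by ring
      _ ≤ ε i * p ^ (t * r) + ε i * p ^ (t * r) := by
          gcongr
          rw [Finset.sum_const, nsmul_eq_mul, mul_div_assoc', div_le_iff₀ hm0, mul_comm]
          have hc : (ch.card : ℝ) ≤ (m : ℝ) + 1 := by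
            have := Finset.card_le_univ ch
            rw [Fintype.card_fin] at this
            exact_mod_cast this
          have : 0 ≤ ε i * p ^ (t * r) := mul_nonneg (hε i).le (by positivity)
          gcongr
      _ = _ := by ring

open Finset BigOperators in
theorem td_ext {V W : Type} [Fintype V] [DecidableEq V] [Fintype W] [Nonempty W]
    {H : SimpleGraph V} {m : ℕ} (R : BlockRep H m) (G : SimpleGraph W) (p : ℝ)
    (ε : ℕ → ℝ) (k : Fin (m + 1)) (f : V → W)
    (hf : ¬ tdBad R G p ε k f) :
    tdMu G (R.P k) f ^ (R.B k).card / 2 ≤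
      𝔼 x : V → W, tdInd ((∀ v ∈ R.B k, x v ∈ tdN G (R.P k) f) ∧
        ∀ j : Fin (m + 1), 2 ≤ (j : ℕ) → R.γ j = k → ¬ tdBad R G p ε j x) := by
  classical
  have hm0 : (0:ℝ) < (m : ℝ) + 1 := by positivity
  have hmu := tdMu_nonneg G (R.P k) f
  set ch := Finset.univ.filter
      (fun j : Fin (m + 1) => 2 ≤ (j : ℕ) ∧ R.γ j = k) with hch
  have hpt : ∀ x : V → W, tdInd (∀ v ∈ R.B k, x v ∈ tdN G (R.P k) f) -
      ∑ j ∈ ch, tdInd (∀ v ∈ R.B k, x v ∈ tdN G (R.P k) f) * tdInd (tdBad R G p ε j x)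
      ≤ tdInd ((∀ v ∈ R.B k, x v ∈ tdN G (R.P k) f) ∧
        ∀ j : Fin (m + 1), 2 ≤ (j : ℕ) → R.γ j = k → ¬ tdBad R G p ε j x) := by
    intro x
    have hterm : ∀ j ∈ ch, 0 ≤ tdInd (∀ v ∈ R.B k, x v ∈ tdN G (R.P k) f) *
        tdInd (tdBad R G p ε j x) := fun j _ => mul_nonneg (tdInd_nonneg _) (tdInd_nonneg _)
    have hsum := Finset.sum_nonneg hterm
    by_cases h1 : ∀ v ∈ R.B k, x v ∈ tdN G (R.P k) f
    · by_cases h2 : ∀ j : Fin (m + 1), 2 ≤ (j : ℕ) → R.γ j = k → ¬ tdBad R G p ε j x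
      · rw [tdInd_true (And.intro h1 h2)]
        have := tdInd_true h1
        linarith
      · have h3 := h2
        push Not at h3
        obtain ⟨j, hj1, hj2, hj3⟩ := h3
        have hs := Finset.single_le_sum hterm
          (Finset.mem_filter.2 ⟨Finset.mem_univ j, hj1, hj2⟩)
        rw [tdInd_true h1, tdInd_true hj3] at hs
        have h0 := tdInd_nonneg ((∀ v ∈ R.B k, x v ∈ tdN G (R.P k) f) ∧
          ∀ j : Fin (m + 1), 2 ≤ (j : ℕ) → R.γ j = k → ¬ tdBad R G p ε j x)
        rw [tdInd_true h1]
        linarith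
    · have := tdInd_nonneg ((∀ v ∈ R.B k, x v ∈ tdN G (R.P k) f) ∧
        ∀ j : Fin (m + 1), 2 ≤ (j : ℕ) → R.γ j = k → ¬ tdBad R G p ε j x)
      have := tdInd_false h1
      linarith
  have hchild : ∀ j ∈ ch, 𝔼 x : V → W, tdInd (∀ v ∈ R.B k, x v ∈ tdN G (R.P k) f) *
      tdInd (tdBad R G p ε j x) ≤ tdMu G (R.P k) f ^ (R.B k).card / (2 * ((m : ℝ) + 1)) := by
    intro j hj
    obtain ⟨-, hj1, hj2⟩ := Finset.mem_filter.1 hj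
    have hsub : R.P j ⊆ R.B k := hj2 ▸ R.P_subset j hj1
    have hlt : (k : ℕ) < (j : ℕ) := hj2 ▸ (R.γ_lt j hj1).2
    have hE : 2 * ((m : ℝ) + 1) * 𝔼 x : V → W, tdInd (∀ v ∈ R.P j, x v ∈ tdN G (R.P k) f) *
        tdInd (tdBad R G p ε j x) ≤ tdMu G (R.P k) f ^ (R.P j).card := by
      by_contra hcon
      apply hf
      rw [tdBad.eq_def]
      exact Or.inr ⟨j, hlt, hj1, hj2, not_le.1 hcon⟩
    have hfac := td_factor (R.B k \ R.P j) (tdN G (R.P k) f)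
      (fun x => tdInd (∀ v ∈ R.P j, x v ∈ tdN G (R.P k) f) * tdInd (tdBad R G p ε j x))
      (by
        intro g x
        have hag : ∀ v ∈ R.P j, (R.B k \ R.P j).piecewise x g v = g v := by
          intro v hv
          apply Finset.piecewise_eq_of_notMem
          simp [hv]
        have e1 : (∀ v ∈ R.P j, (R.B k \ R.P j).piecewise x g v ∈ tdN G (R.P k) f) ↔
            ∀ v ∈ R.P j, g v ∈ tdN G (R.P k) f :=
          forall₂_congr fun v hv => by rw [hag v hv]
        simp only [e1, tdBad_congr R G p ε j _ _ hag])
    have hsplit : ∀ x : V → W, tdInd (∀ v ∈ R.B k, x v ∈ tdN G (R.P k) f)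
        = tdInd (∀ v ∈ R.B k \ R.P j, x v ∈ tdN G (R.P k) f) *
          tdInd (∀ v ∈ R.P j, x v ∈ tdN G (R.P k) f) := by
      intro x
      rw [← tdInd_and]
      congr 1
      refine propext ⟨fun h => ⟨fun v hv => h v (Finset.mem_sdiff.1 hv).1,
        fun v hv => h v (hsub hv)⟩, fun h v hv => ?_⟩
      by_cases hvj : v ∈ R.P j
      · exact h.2 v hvj
      · exact h.1 v (Finset.mem_sdiff.2 ⟨hv, hvj⟩)
    have hrw : 𝔼 x : V → W, tdInd (∀ v ∈ R.B k, x v ∈ tdN G (R.P k) f) *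
      tdInd (tdBad R G p ε j x) = 𝔼 x : V → W,
        tdInd (∀ v ∈ R.B k \ R.P j, x v ∈ tdN G (R.P k) f) *
        (tdInd (∀ v ∈ R.P j, x v ∈ tdN G (R.P k) f) * tdInd (tdBad R G p ε j x)) :=
      Finset.expect_congr rfl fun x _ => by rw [hsplit x, mul_assoc]
    rw [hrw, hfac, le_div_iff₀ (by positivity)]
    change tdMu G (R.P k) f ^ _ * _ * _ ≤ _
    have hc : (R.B k).card = (R.B k \ R.P j).card + (R.P j).card :=
      (Finset.card_sdiff_add_card_eq_card hsub).symm
    rw [hc, pow_add, mul_assoc]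
    gcongr
    rw [mul_comm]
    exact hE
  calc tdMu G (R.P k) f ^ (R.B k).card / 2
      ≤ tdMu G (R.P k) f ^ (R.B k).card -
        ∑ j ∈ ch, tdMu G (R.P k) f ^ (R.B k).card / (2 * ((m : ℝ) + 1)) := by
        rw [Finset.sum_const, nsmul_eq_mul]
        have hc : (ch.card : ℝ) ≤ (m : ℝ) + 1 := by
          have := Finset.card_le_univ ch
          rw [Fintype.card_fin] at this
          exact_mod_cast this
        have h0 : 0 ≤ tdMu G (R.P k) f ^ (R.B k).card / (2 * ((m : ℝ) + 1)) := by positivity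
        have h1 := mul_le_mul_of_nonneg_right hc h0
        have h2 : ((m : ℝ) + 1) * (tdMu G (R.P k) f ^ (R.B k).card / (2 * ((m : ℝ) + 1)))
          = tdMu G (R.P k) f ^ (R.B k).card / 2 := by field_simp
        linarith
    _ ≤ 𝔼 x : V → W, (tdInd (∀ v ∈ R.B k, x v ∈ tdN G (R.P k) f) -
      ∑ j ∈ ch, tdInd (∀ v ∈ R.B k, x v ∈ tdN G (R.P k) f) * tdInd (tdBad R G p ε j x)) := by
        rw [Finset.expect_sub_distrib, Finset.expect_sum_comm, td_box]
        change _ ≤ tdMu G (R.P k) f ^ _ - _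
        gcongr with j hj
        exact hchild j hj
    _ ≤ _ := Finset.expect_le_expect fun x _ => hpt x

/-- Partial good homomorphisms. -/
def tdA {V W : Type} [Fintype V] [DecidableEq V] [Fintype W]
    {H : SimpleGraph V} {m : ℕ} (R : BlockRep H m) (G : SimpleGraph W) (p : ℝ)
    (ε : ℕ → ℝ) (k : ℕ) (f : V → W) : Prop :=
  ¬ tdBad R G p ε 1 f ∧ ∀ i : Fin (m + 1), 1 ≤ (i : ℕ) → (i : ℕ) ≤ k →
    (∀ v ∈ R.B i, f v ∈ tdN G (R.P i) f) ∧
    ∀ j : Fin (m + 1), 2 ≤ (j : ℕ) → R.γ j = i → ¬ tdBad R G p ε j f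

theorem td_one_val {m : ℕ} (hm : 1 ≤ m) : ((1 : Fin (m + 1)) : ℕ) = 1 := by
  rw [Fin.val_one', Nat.mod_eq_of_lt (by omega)]

theorem tdA_not_bad {V W : Type} [Fintype V] [DecidableEq V] [Fintype W]
    {H : SimpleGraph V} {m : ℕ} (R : BlockRep H m) (G : SimpleGraph W) (p : ℝ)
    (ε : ℕ → ℝ) (k : ℕ) (f : V → W) (i : Fin (m + 1)) (hi : (i : ℕ) = k + 1)
    (hf : tdA R G p ε k f) : ¬ tdBad R G p ε i f := by
  by_cases h2 : 2 ≤ (i : ℕ)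
  · obtain ⟨ha, hb⟩ := R.γ_lt i h2
    exact (hf.2 (R.γ i) ha (by omega)).2 i h2 rfl
  · have : i = 1 := by
      apply Fin.ext
      rw [td_one_val R.hm]; omega
    rw [this]; exact hf.1

open Finset BigOperators in
theorem td_step {V W : Type} [Fintype V] [DecidableEq V] [Fintype W] [Nonempty W]
    {H : SimpleGraph V} {m : ℕ} (R : BlockRep H m) (G : SimpleGraph W) (p : ℝ)
    (ε : ℕ → ℝ) (k : ℕ) (i : Fin (m + 1)) (hi : (i : ℕ) = k + 1) :
    𝔼 f : V → W, tdInd (tdA R G p ε k f) * (tdMu G (R.P i) f ^ (R.B i).card / 2) ≤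
      𝔼 f : V → W, tdInd (tdA R G p ε (k + 1) f) := by
  classical
  rw [← td_resample (R.B i) (fun f => tdInd (tdA R G p ε (k + 1) f))]
  refine Finset.expect_le_expect fun f _ => ?_
  by_cases hA : tdA R G p ε k f
  swap
  · rw [tdInd_false hA, zero_mul]
    exact Finset.expect_nonneg fun x _ => tdInd_nonneg _
  rw [tdInd_true hA, one_mul]
  refine (td_ext R G p ε i f (tdA_not_bad R G p ε k f i hi hA)).trans ?_
  refine Finset.expect_le_expect fun x _ => ?_
  by_cases hx : ((∀ v ∈ R.B i, x v ∈ tdN G (R.P i) f) ∧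
        ∀ j : Fin (m + 1), 2 ≤ (j : ℕ) → R.γ j = i → ¬ tdBad R G p ε j x)
  swap
  · rw [tdInd_false hx]; exact tdInd_nonneg _
  rw [tdInd_true hx]
  refine le_of_eq (Eq.symm (tdInd_true ?_))
  -- agreement facts
  have hB : ∀ j : Fin (m + 1), j ≠ i → ∀ v ∈ R.B j, (R.B i).piecewise x f v = f v := by
    intro j hj v hv
    apply Finset.piecewise_eq_of_notMem
    intro hv'
    exact hj (td_B_disj R j i v hv hv')
  have hBi : ∀ v ∈ R.B i, (R.B i).piecewise x f v = x v := by
    intro v hv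
    exact Finset.piecewise_eq_of_mem _ _ _ hv
  have hP : ∀ j : Fin (m + 1), 1 ≤ (j : ℕ) → (j : ℕ) ≤ k + 1 →
      ∀ v ∈ R.P j, (R.B i).piecewise x f v = f v := by
    intro j hj1 hj2 v hv
    obtain ⟨l, hl, hsub⟩ := td_P_sub R j hj1
    refine hB l ?_ v (hsub hv)
    intro h
    rw [h] at hl
    omega
  refine ⟨?_, ?_⟩
  · rw [tdBad_congr R G p ε 1 _ f (hP 1 (td_one_val R.hm).ge (by rw [td_one_val R.hm]; omega))]
    exact hA.1
  · intro j hj1 hj2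
    rw [tdN_congr G (R.P j) _ f (hP j hj1 hj2)]
    by_cases hji : j = i
    · subst hji
      refine ⟨fun v hv => ?_, fun l hl1 hl2 => ?_⟩
      · rw [hBi v hv]; exact hx.1 v hv
      · rw [tdBad_congr R G p ε l _ x (fun v hv => hBi v (hl2 ▸ R.P_subset l hl1 hv))]
        exact hx.2 l hl1 hl2
    · have hjk : (j : ℕ) ≤ k := by
        have : (j : ℕ) ≠ (i : ℕ) := fun h => hji (Fin.ext h)
        omega
      obtain ⟨h1, h2⟩ := hA.2 j hj1 hjk
      refine ⟨fun v hv => ?_, fun l hl1 hl2 => ?_⟩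
      · rw [hB j hji v hv]; exact h1 v hv
      · rw [tdBad_congr R G p ε l _ f (fun v hv => hB j hji v (hl2 ▸ R.P_subset l hl1 hv))]
        exact h2 l hl1 hl2

theorem tdMu_ge {V W : Type} [Fintype V] [DecidableEq V] [Fintype W]
    {H : SimpleGraph V} {m : ℕ} (R : BlockRep H m) (G : SimpleGraph W) (p : ℝ)
    (ε : ℕ → ℝ) (i : Fin (m + 1)) (f : V → W) (hf : ¬ tdBad R G p ε i f) :
    ε i * p ^ (R.P i).card ≤ tdMu G (R.P i) f := by
  by_contra h
  apply hf
  rw [tdBad.eq_def]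
  exact Or.inl (not_le.1 h)

open Finset BigOperators in
/-- The main lower bound, with `hE` recording the mean codegree. -/
theorem td_main {V W : Type} [Fintype V] [DecidableEq V] [Fintype W] [Nonempty W]
    {H : SimpleGraph V} {m : ℕ} (R : BlockRep H m) (G : SimpleGraph W) (p : ℝ) (hp : 0 < p)
    (ε : ℕ → ℝ) (hε : ∀ i, 0 < ε i) (hε1 : ∀ i, ε i ≤ 1 / 4)
    (hεk : ∀ i k : ℕ, i < k → ∀ a, a ≤ Fintype.card V →
      ((m : ℝ) + 1) * (2 * ((m : ℝ) + 1)) * (2 * ε k) ≤ ε i ^ a * ε i)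
    (hE : 𝔼 f : V → W, tdMu G (R.P 1) f = p ^ (R.P 1).card) :
    ∀ k : ℕ, k + 1 ≤ m → (1 / 2 : ℝ) * ∏ i ∈ Finset.univ.filter
      (fun i : Fin (m + 1) => 1 ≤ (i : ℕ) ∧ (i : ℕ) ≤ k + 1),
        ((ε i * p ^ (R.P i).card) ^ (R.B i).card / 2)
      ≤ 𝔼 f : V → W, tdInd (tdA R G p ε (k + 1) f) := by
  classical
  intro k
  induction k with
  | zero =>
    intro _
    have h1v := td_one_val R.hm
    have hset : Finset.univ.filter
      (fun i : Fin (m + 1) => 1 ≤ (i : ℕ) ∧ (i : ℕ) ≤ 0 + 1) = {1} := by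
      ext i
      simp only [Finset.mem_filter, Finset.mem_univ, true_and, Finset.mem_singleton, Fin.ext_iff,
        h1v]
      omega
    rw [hset, Finset.prod_singleton]
    refine le_trans ?_ (td_step R G p ε 0 1 h1v)
    set t := (R.P 1).card with ht
    have hbp : 1 ≤ (R.B 1).card := (R.B_nonempty 1).card_pos
    have hbad := td_bad_bound R G p hp ε hε (fun i => (hε1 i).trans (by norm_num)) hεk 1 h1v.ge 1
      le_rfl (td_P_pos R 1 h1v.ge)
    simp only [pow_one, mul_one] at hbad
    rw [h1v] at hbad
    set a := ε ((1 : Fin (m + 1)) : ℕ) * p ^ t with ha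
    have ha0 : 0 < a := mul_pos (hε _) (pow_pos hp _)
    have hpt0 : 0 < p ^ t := pow_pos hp _
    have hgood : p ^ t / 2 ≤
        𝔼 f : V → W, tdInd (¬ tdBad R G p ε 1 f) * tdMu G (R.P 1) f := by
      have hsum : 𝔼 f : V → W, tdMu G (R.P 1) f =
          (𝔼 f : V → W, tdInd (¬ tdBad R G p ε 1 f) * tdMu G (R.P 1) f) +
          𝔼 f : V → W, tdInd (tdBad R G p ε 1 f) * tdMu G (R.P 1) f := by
        rw [← Finset.expect_add_distrib]
        refine Finset.expect_congr rfl fun f _ => ?_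
        by_cases hb : tdBad R G p ε 1 f
        · rw [tdInd_true hb, tdInd_false (not_not.2 hb)]; ring
        · rw [tdInd_false hb, tdInd_true hb]; ring
      have : 2 * ε 1 * p ^ t ≤ (1 / 2) * p ^ t := by
        gcongr
        have := hε1 1
        linarith
      linarith
    calc (1 / 2 : ℝ) * (a ^ (R.B 1).card / 2)
        = (a / 2) * (a ^ ((R.B 1).card - 1) / 2) := by
          obtain ⟨b, hb⟩ : ∃ b, (R.B 1).card = b + 1 := ⟨_, (Nat.sub_add_cancel hbp).symm⟩
          rw [hb, Nat.add_sub_cancel, pow_succ]; ring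
      _ ≤ (p ^ t / 2) * (a ^ ((R.B 1).card - 1) / 2) := by
          gcongr
          rw [ha]
          have := hε1 ((1 : Fin (m + 1)) : ℕ)
          nlinarith
      _ ≤ (𝔼 f : V → W, tdInd (¬ tdBad R G p ε 1 f) * tdMu G (R.P 1) f) *
            (a ^ ((R.B 1).card - 1) / 2) := by gcongr
      _ ≤ _ := by
          rw [Finset.expect_mul]
          refine Finset.expect_le_expect fun f _ => ?_
          by_cases hb : tdBad R G p ε 1 f
          · rw [tdInd_false (not_not.2 hb), tdInd_false (fun h => h.1 hb)]; simp
          · have hA : tdA R G p ε 0 f := ⟨hb, fun i h1 h2 => by omega⟩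
            rw [tdInd_true hA, tdInd_true hb, one_mul, one_mul]
            have hge := tdMu_ge R G p ε 1 f hb
            have hmu := tdMu_nonneg G (R.P 1) f
            obtain ⟨b, hb⟩ : ∃ b, (R.B 1).card = b + 1 := ⟨_, (Nat.sub_add_cancel hbp).symm⟩
            rw [hb, Nat.add_sub_cancel, pow_succ]
            have : a ^ b ≤ tdMu G (R.P 1) f ^ b := by gcongr
            nlinarith
  | succ k ih =>
    intro hk
    have ih := ih (by omega)
    set i : Fin (m + 1) := ⟨k + 2, by omega⟩ with hi
    have hset : Finset.univ.filter
      (fun i : Fin (m + 1) => 1 ≤ (i : ℕ) ∧ (i : ℕ) ≤ k + 1 + 1) =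
      insert i (Finset.univ.filter
        (fun i : Fin (m + 1) => 1 ≤ (i : ℕ) ∧ (i : ℕ) ≤ k + 1)) := by
      ext j
      simp only [Finset.mem_filter, Finset.mem_univ, true_and, Finset.mem_insert, Fin.ext_iff, hi]
      omega
    rw [hset, Finset.prod_insert (by simp [hi])]
    refine le_trans ?_ (td_step R G p ε (k + 1) i rfl)
    have hc0 : 0 ≤ (ε i * p ^ (R.P i).card) ^ (R.B i).card / 2 := by
      have := hε i
      positivity
    calc _ = ((1 / 2 : ℝ) * ∏ i ∈ Finset.univ.filter
      (fun i : Fin (m + 1) => 1 ≤ (i : ℕ) ∧ (i : ℕ) ≤ k + 1),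
        ((ε i * p ^ (R.P i).card) ^ (R.B i).card / 2)) *
          ((ε i * p ^ (R.P i).card) ^ (R.B i).card / 2) := by ring
      _ ≤ (𝔼 f : V → W, tdInd (tdA R G p ε (k + 1) f)) *
          ((ε i * p ^ (R.P i).card) ^ (R.B i).card / 2) := by gcongr
      _ ≤ _ := by
        rw [Finset.expect_mul]
        refine Finset.expect_le_expect fun f _ => ?_
        by_cases hA : tdA R G p ε (k + 1) f
        · have hge := tdMu_ge R G p ε i f (tdA_not_bad R G p ε (k + 1) f i rfl hA)
          have := hε i
          have := tdInd_nonneg (tdA R G p ε (k + 1) f)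
          gcongr
        · rw [tdInd_false hA]; simp

theorem td_edges {V : Type} [Fintype V] [DecidableEq V]
    {H : SimpleGraph V} {m : ℕ} (R : BlockRep H m) :
    ∑ i ∈ Finset.univ.filter (fun i : Fin (m + 1) => 1 ≤ (i : ℕ) ∧ (i : ℕ) ≤ m),
      (R.P i).card * (R.B i).card ≤ Nat.card H.edgeSet := by
  classical
  set I := Finset.univ.filter (fun i : Fin (m + 1) => 1 ≤ (i : ℕ) ∧ (i : ℕ) ≤ m) with hI
  have hcard : (I.sigma (fun i => R.P i ×ˢ R.B i)).card
      = ∑ i ∈ I, (R.P i).card * (R.B i).card := by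
    rw [Finset.card_sigma]
    simp only [Finset.card_product]
  rw [← hcard, Nat.card_eq_fintype_card, ← SimpleGraph.edgeFinset_card]
  apply Finset.card_le_card_of_injOn (fun q => s(q.2.1, q.2.2))
  · rintro ⟨i, u, v⟩ hq
    simp only [Finset.mem_coe, Finset.mem_sigma, Finset.mem_product, hI, Finset.mem_filter] at hq
    simp only [Finset.mem_coe, SimpleGraph.mem_edgeFinset, SimpleGraph.mem_edgeSet]
    exact (R.adj_iff u v).2 ⟨i, hq.1.2.1, Or.inl hq.2⟩
  · rintro ⟨i, u, v⟩ hq ⟨j, u', v'⟩ hq' heq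
    simp only [Finset.mem_coe, Finset.mem_sigma, Finset.mem_product, hI, Finset.mem_filter]
      at hq hq'
    obtain ⟨⟨-, hi, -⟩, hu, hv⟩ := hq
    obtain ⟨⟨-, hj, -⟩, hu', hv'⟩ := hq'
    simp only [Sym2.eq_iff] at heq
    rcases heq with ⟨rfl, rfl⟩ | ⟨rfl, rfl⟩
    · obtain rfl := td_B_disj R i j _ hv hv'
      rfl
    · exfalso
      obtain ⟨a, ha, hsa⟩ := td_P_sub R i hi
      obtain ⟨b, hb, hsb⟩ := td_P_sub R j hj
      have h1 := td_B_disj R _ _ _ (hsa hu) hv'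
      have h2 := td_B_disj R _ _ _ (hsb hu') hv
      rw [h1] at ha
      rw [h2] at hb
      omega

theorem td_eps (m M : ℕ) : ∃ ε : ℕ → ℝ, (∀ i, 0 < ε i) ∧ (∀ i, ε i ≤ 1 / 4) ∧
    ∀ i k : ℕ, i < k → ∀ a, a ≤ M →
      ((m : ℝ) + 1) * (2 * ((m : ℝ) + 1)) * (2 * ε k) ≤ ε i ^ a * ε i := by
  set D : ℝ := 4 * ((m : ℝ) + 1) ^ 2 with hD
  have hD1 : 1 ≤ D := by
    have : (0:ℝ) ≤ m := Nat.cast_nonneg m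
    rw [hD]; nlinarith
  have hD0 : 0 < D := by linarith
  let ε : ℕ → ℝ := fun i => Nat.rec (1 / 4 : ℝ) (fun _ e => e ^ (M + 1) / D) i
  have hs : ∀ i, ε (i + 1) = ε i ^ (M + 1) / D := fun i => rfl
  have hpos : ∀ i, 0 < ε i := by
    intro i
    induction i with
    | zero => change (0:ℝ) < 1 / 4; norm_num
    | succ i ih => rw [hs]; positivity
  have hle : ∀ i, ε i ≤ 1 / 4 := by
    intro i
    induction i with
    | zero => exact le_rfl
    | succ i ih =>
      rw [hs, div_le_iff₀ hD0]
      have h1 : ε i ^ (M + 1) ≤ ε i :=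
        pow_le_of_le_one (hpos i).le (by linarith) (by omega)
      linarith
  have hanti : Antitone ε := by
    apply antitone_nat_of_succ_le
    intro i
    rw [hs, div_le_iff₀ hD0]
    have h1 : ε i ^ (M + 1) ≤ ε i :=
      pow_le_of_le_one (hpos i).le (by linarith [hle i]) (by omega)
    have := hpos i
    nlinarith
  refine ⟨ε, hpos, hle, fun i k hik a ha => ?_⟩
  have h1 : ε k ≤ ε i ^ (M + 1) / D := by rw [← hs]; exact hanti hik
  rw [le_div_iff₀ hD0] at h1
  calc _ = ε k * D := by rw [hD]; ring
    _ ≤ ε i ^ (M + 1) := h1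
    _ ≤ ε i ^ (a + 1) :=
      pow_le_pow_of_le_one (hpos i).le (by linarith [hle i]) (by omega)
    _ = _ := pow_succ _ _

open Finset BigOperators in
theorem td_mean {V W : Type} [Fintype V] [DecidableEq V] [Fintype W] [Nonempty W]
    (G : SimpleGraph W) [DecidableRel G.Adj] (P : Finset V) :
    𝔼 f : V → W, tdMu G P f =
      (∑ v : W, (G.degree v : ℝ) ^ P.card) / (Fintype.card W : ℝ) ^ (P.card + 1) := by
  classical
  have h1 : ∀ f : V → W, tdMu G P f = 𝔼 w : W, tdInd (∀ u ∈ P, f u ∈ G.neighborFinset w) := by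
    intro f
    rw [Fintype.expect_eq_sum_div_card]
    unfold tdMu
    congr 1
    rw [tdN, Finset.card_filter, Nat.cast_sum]
    refine Finset.sum_congr rfl fun w _ => ?_
    have : (∀ u ∈ P, G.Adj (f u) w) ↔ (∀ u ∈ P, f u ∈ G.neighborFinset w) := by
      refine forall₂_congr fun u _ => ?_
      rw [SimpleGraph.mem_neighborFinset, SimpleGraph.adj_comm]
    by_cases h : ∀ u ∈ P, G.Adj (f u) w
    · rw [tdInd_true (this.1 h)]; rw [if_pos h, Nat.cast_one]
    · rw [tdInd_false (fun h' => h (this.2 h'))]; rw [if_neg h, Nat.cast_zero]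
  simp only [h1]
  rw [Finset.expect_comm]
  simp only [td_box, SimpleGraph.card_neighborFinset_eq_degree]
  rw [Fintype.expect_eq_sum_div_card]
  simp only [div_pow]
  rw [← Finset.sum_div, div_div, pow_succ]

open Finset BigOperators in
theorem td_hom {V W : Type} [Fintype V] [DecidableEq V] [Fintype W] [Nonempty W]
    {H : SimpleGraph V} {m : ℕ} (R : BlockRep H m) (G : SimpleGraph W) (p : ℝ) (ε : ℕ → ℝ) :
    𝔼 f : V → W, tdInd (tdA R G p ε m f) ≤ homDensity H G := by
  classical
  have h1 : ∑ f : V → W, tdInd (tdA R G p ε m f)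
      = (Fintype.card {f : V → W // tdA R G p ε m f} : ℝ) := by
    rw [Fintype.card_subtype, Finset.card_filter, Nat.cast_sum]
    refine Finset.sum_congr rfl fun f _ => ?_
    by_cases h : tdA R G p ε m f
    · rw [tdInd_true h]; simp [h]
    · rw [tdInd_false h]; simp [h]
  rw [Fintype.expect_eq_sum_div_card, h1, Fintype.card_fun, homDensity]
  push_cast
  gcongr
  rw [← Nat.card_eq_fintype_card]
  have : Finite (H →g G) := Finite.of_injective (fun φ : H →g G => (φ : V → W))
    DFunLike.coe_injective
  refine Nat.card_le_card_of_injective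
    (fun f : {f : V → W // tdA R G p ε m f} => (⟨f.1, ?_⟩ : H →g G)) ?_
  · intro u v huv
    obtain ⟨i, hi, h⟩ := (R.adj_iff u v).1 huv
    have hA := (f.2.2 i hi (by omega)).1
    rcases h with ⟨hu, hv⟩ | ⟨hv, hu⟩
    · have := hA v hv
      simp only [tdN, Finset.mem_filter, Finset.mem_univ, true_and] at this
      exact this u hu
    · have := hA u hu
      simp only [tdN, Finset.mem_filter, Finset.mem_univ, true_and] at this
      exact (this v hv).symm
  · intro f g hfg
    apply Subtype.ext
    exact congrArg (fun φ : H →g G => (φ : V → W)) hfg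

theorem td_rnorm_pow {W : Type} [Fintype W] (G : SimpleGraph W) [DecidableRel G.Adj]
    (s : ℕ) (hs : 1 ≤ s) : rnormDensity G s ^ s =
      (∑ v : W, (G.degree v : ℝ) ^ s) / (Fintype.card W : ℝ) ^ (s + 1) := by
  unfold rnormDensity
  exact Real.rpow_inv_natCast_pow (by positivity) (by omega)

theorem td_rnorm_nonneg {W : Type} [Fintype W] (G : SimpleGraph W) [DecidableRel G.Adj]
    (s : ℕ) : 0 ≤ rnormDensity G s := by
  unfold rnormDensity
  positivity

theorem td_rnorm_le_one {W : Type} [Fintype W] [Nonempty W] (G : SimpleGraph W)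
    [DecidableRel G.Adj] (s : ℕ) (hs : 1 ≤ s) : rnormDensity G s ≤ 1 := by
  have hn : (0:ℝ) < Fintype.card W := by exact_mod_cast Fintype.card_pos
  rw [← pow_le_one_iff_of_nonneg (td_rnorm_nonneg G s) (by omega : s ≠ 0), td_rnorm_pow G s hs,
    div_le_one (by positivity)]
  calc ∑ v : W, (G.degree v : ℝ) ^ s ≤ ∑ _v : W, (Fintype.card W : ℝ) ^ s := by
        gcongr with v _
        exact_mod_cast (G.degree_lt_card_verts v).le
    _ = _ := by rw [Finset.sum_const, nsmul_eq_mul, Finset.card_univ, pow_succ, mul_comm]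

theorem td_edge_le {W : Type} [Fintype W] [Nonempty W] (G : SimpleGraph W)
    [DecidableRel G.Adj] (s : ℕ) (hs : 1 ≤ s) : edgeDensity' G ≤ rnormDensity G s := by
  classical
  have hn : (0:ℝ) < Fintype.card W := by exact_mod_cast Fintype.card_pos
  have he : edgeDensity' G = (∑ v : W, (G.degree v : ℝ)) / (Fintype.card W : ℝ) ^ 2 := by
    unfold edgeDensity'
    congr 1
    rw [Nat.card_eq_fintype_card, ← SimpleGraph.edgeFinset_card]
    exact_mod_cast (G.sum_degrees_eq_twice_card_edges).symm
  have he0 : 0 ≤ edgeDensity' G := by unfold edgeDensity'; positivity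
  rw [← pow_le_pow_iff_left₀ he0 (td_rnorm_nonneg G s) (by omega : s ≠ 0), td_rnorm_pow G s hs, he]
  obtain ⟨r, rfl⟩ : ∃ r, s = r + 1 := ⟨s - 1, by omega⟩
  have key := pow_sum_div_card_le_sum_pow (s := (Finset.univ : Finset W))
    (f := fun v => (G.degree v : ℝ)) (n := r) (fun v _ => by positivity)
  rw [Finset.card_univ] at key
  rw [div_pow, div_le_div_iff₀ (by positivity) (by positivity)]
  rw [div_le_iff₀ (by positivity)] at key
  calc _ ≤ ((∑ v : W, (G.degree v : ℝ) ^ (r + 1)) * (Fintype.card W : ℝ) ^ r) *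
        (Fintype.card W : ℝ) ^ (r + 1 + 1) := by gcongr
    _ = _ := by ring

end TDHelpers

/-- **Theorem 1.8, first part.** If `H` is tree-degenerate with block representation
`(B₀, …, B_m, P)` and `s = |B₀|`, there is `c₁ = c₁(H) > 0` such that for every
graph `G`, `t_H(G) ≥ c₁ p_s(G)^{e(H)} ≥ c₁ t_{K₂}(G)^{e(H)}`. -/
theorem tree_degenerate_sidorenko {VH : Type} [Fintype VH] [DecidableEq VH]
    (H : SimpleGraph VH) (m : ℕ) (R : BlockRep H m) :
    ∃ c₁ : ℝ, 0 < c₁ ∧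
      ∀ (W : Type) [Fintype W] [Nonempty W] (G : SimpleGraph W) [DecidableRel G.Adj],
        c₁ * rnormDensity G ((R.B 0).card) ^ (Nat.card H.edgeSet) ≤ homDensity H G ∧
        c₁ * edgeDensity' G ^ (Nat.card H.edgeSet) ≤
          c₁ * rnormDensity G ((R.B 0).card) ^ (Nat.card H.edgeSet) := by
  classical
  obtain ⟨ε, hε, hε1, hεk⟩ := td_eps m (Fintype.card VH)
  set I := Finset.univ.filter (fun i : Fin (m + 1) => 1 ≤ (i : ℕ) ∧ (i : ℕ) ≤ m) with hI
  have hcpos : 0 < (1 / 2 : ℝ) * ∏ i ∈ I, (ε i ^ (R.B i).card / 2) := by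
    have : 0 < ∏ i ∈ I, (ε i ^ (R.B i).card / 2) :=
      Finset.prod_pos fun i _ => by have := hε i; positivity
    positivity
  have hs : 1 ≤ (R.B 0).card := (R.B_nonempty 0).card_pos
  have hm := R.hm
  have hedges := td_edges R
  rw [← hI] at hedges
  have h1v := td_one_val R.hm
  have h1I : (1 : Fin (m + 1)) ∈ I := by
    rw [hI, Finset.mem_filter]
    exact ⟨Finset.mem_univ _, by omega, by omega⟩
  have hepos : 0 < Nat.card H.edgeSet := by
    refine lt_of_lt_of_le ?_ hedges
    refine lt_of_lt_of_le ?_ (Finset.single_le_sum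
      (f := fun i => (R.P i).card * (R.B i).card) (fun i _ => Nat.zero_le _) h1I)
    exact Nat.mul_pos (td_P_pos R 1 h1v.ge) (R.B_nonempty 1).card_pos
  refine ⟨_, hcpos, ?_⟩
  intro W _ _ G _
  set p := rnormDensity G ((R.B 0).card) with hp
  have hp0 : 0 ≤ p := td_rnorm_nonneg G _
  have hp1 : p ≤ 1 := td_rnorm_le_one G _ hs
  constructor
  · rcases hp0.eq_or_lt with hz | hpos
    · rw [← hz, zero_pow hepos.ne', mul_zero]
      unfold homDensity
      positivity
    · have hE := td_mean (V := VH) G (R.P 1)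
      rw [R.P_one, ← td_rnorm_pow G _ hs, ← hp, ← R.P_one] at hE
      have hmain := td_main R G p hpos ε hε hε1 hεk hE (m - 1) (by omega)
      rw [Nat.sub_add_cancel hm, ← hI] at hmain
      refine le_trans ?_ (hmain.trans (td_hom R G p ε))
      have hprod : ∏ i ∈ I, ((ε i * p ^ (R.P i).card) ^ (R.B i).card / 2)
          = (∏ i ∈ I, (ε i ^ (R.B i).card / 2)) *
            p ^ (∑ i ∈ I, (R.P i).card * (R.B i).card) := by
        rw [← Finset.prod_pow_eq_pow_sum, ← Finset.prod_mul_distrib]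
        refine Finset.prod_congr rfl fun i _ => ?_
        rw [mul_pow, ← pow_mul]; ring
      rw [hprod, ← mul_assoc]
      refine mul_le_mul_of_nonneg_left ?_ hcpos.le
      exact pow_le_pow_of_le_one hp0 hp1 hedges
  · refine mul_le_mul_of_nonneg_left ?_ hcpos.le
    have he0 : 0 ≤ edgeDensity' G := by unfold edgeDensity'; positivity
    exact pow_le_pow_left₀ he0 (td_edge_le G _ hs) _
end

section
/- Let r ≤ t and let H be an (r,t)-blowup of a tree with h vertices. There exist constants c, c' > 0 such that every n-vertex graph G with ∑_{v∈V(G)} d(v)^r ≥ c n^r contains at least c' n^h (2e(G)/n²)^{e(H)} (labeled, injective) copies of H. In particular, ex(n, H) = O(n^{2−1/r}). -/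
open Finset in
open Classical in
/-- common neighbourhood of a tuple -/
noncomputable def cN {W κ : Type} [Fintype W] (G : SimpleGraph W) (x : κ → W) : Finset W :=
  Finset.univ.filter (fun w => ∀ j, G.Adj (x j) w)

theorem mem_cN {W κ : Type} [Fintype W] (G : SimpleGraph W) (x : κ → W) (w : W) :
    w ∈ cN G x ↔ ∀ j, G.Adj (x j) w := by
  simp [cN]

open Classical in
/-- bad tuples of level `l` -/
noncomputable def badT {W : Type} [Fintype W] (G : SimpleGraph W) (r : ℕ) (τ δ : ℝ) :
    ℕ → Finset (Fin r → W)
  | 0 => Finset.univ.filter (fun x => ¬ Function.Injective x ∨ ((cN G x).card : ℝ) < τ)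
  | (l + 1) => badT G r τ δ l ∪ Finset.univ.filter (fun x =>
      δ * ((cN G x).card : ℝ) ^ r <
        (((Fintype.piFinset (fun _ : Fin r => cN G x)).filter
          (fun y => y ∈ badT G r τ δ l)).card : ℝ))

open Classical in
theorem proj_count {W ι κ : Type} [Fintype ι] [Fintype κ] (e : κ → ι)
    (he : Function.Injective e) (S : Finset W) (T : Set (κ → W)) :
    ((Fintype.piFinset (fun _ : ι => S)).filter (fun g => g ∘ e ∈ T)).card ≤
      ((Fintype.piFinset (fun _ : κ => S)).filter (fun y => y ∈ T)).card *
        S.card ^ (Fintype.card ι - Fintype.card κ) := by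
  have h1 : Fintype.card {i // i ∉ Set.range e} = Fintype.card ι - Fintype.card κ := by
    rw [Fintype.card_subtype_compl]
    congr 1
    exact (Fintype.card_congr (Equiv.ofInjective e he)).symm
  have h2 : S.card ^ (Fintype.card ι - Fintype.card κ) =
      (Fintype.piFinset (fun _ : {i // i ∉ Set.range e} => S)).card := by
    rw [Fintype.card_piFinset, Finset.prod_const, Finset.card_univ, h1]
  rw [h2, ← Finset.card_product]
  apply Finset.card_le_card_of_injOn (fun g => (g ∘ e, fun i => g i.1))
  · intro g hg
    simp only [Finset.coe_filter, Fintype.mem_piFinset, Set.mem_ofPred_eq] at hg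
    simp only [Finset.coe_product, Set.mem_prod, Finset.mem_coe, Finset.mem_filter,
      Fintype.mem_piFinset]
    exact ⟨⟨fun a => hg.1 _, hg.2⟩, fun a => hg.1 _⟩
  · intro g _ g' _ h
    simp only [Prod.mk.injEq] at h
    funext i
    by_cases hi : i ∈ Set.range e
    · obtain ⟨a, rfl⟩ := hi
      exact congrFun h.1 a
    · exact congrFun h.2 ⟨i, hi⟩

open Classical in
theorem count_eq {W ι : Type} [Fintype ι] (S : Finset W) (a b : ι) (hab : a ≠ b) :
    ((Fintype.piFinset (fun _ : ι => S)).filter (fun g => g a = g b)).card ≤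
        S.card ^ (Fintype.card ι - 1) := by
  have h := proj_count (fun j : Fin 2 => if j = 0 then a else b) (by
    intro i j h; fin_cases i <;> fin_cases j <;> simp_all) S {y | y 0 = y 1}
  have hc : 2 ≤ Fintype.card ι := by
    have := Fintype.one_lt_card_iff.2 ⟨a, b, hab⟩
    omega
  have e1 : S.card ^ (Fintype.card ι - 1) = S.card * S.card ^ (Fintype.card ι - 2) := by
    rw [← pow_succ']; congr 1; omega
  rw [e1]
  refine le_trans ?_ (h.trans ?_)
  · apply le_of_eq; congr 1
  · simp only [Fintype.card_fin]
    gcongr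
    apply Finset.card_le_card_of_injOn (fun y => y 0)
    · intro y hy
      simp only [Finset.coe_filter, Fintype.mem_piFinset, Set.mem_ofPred_eq] at hy
      exact hy.1 0
    · intro y hy y' hy' h
      simp only [Finset.coe_filter, Fintype.mem_piFinset, Set.mem_ofPred_eq] at hy hy' h
      funext j
      fin_cases j
      · exact h
      · simp only [Fin.mk_one]; rw [← hy.2, ← hy'.2]; exact h

open Classical in
theorem count_hit {W ι : Type} [Fintype ι] (S F : Finset W) (a : ι) :
    ((Fintype.piFinset (fun _ : ι => S)).filter (fun g => g a ∈ F)).card ≤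
        F.card * S.card ^ (Fintype.card ι - 1) := by
  have h := proj_count (fun j : Fin 1 => a) (by
    intro i j h; exact Subsingleton.elim _ _) S {y | y 0 ∈ F}
  refine le_trans ?_ (h.trans ?_)
  · apply le_of_eq; congr 1; ext g; simp
  · simp only [Fintype.card_fin]
    gcongr
    apply Finset.card_le_card_of_injOn (fun y => y 0)
    · intro y hy
      simp only [Finset.coe_filter, Fintype.mem_piFinset, Set.mem_ofPred_eq] at hy
      exact hy.2
    · intro y hy y' hy' h
      funext j
      rw [Subsingleton.elim j 0]; exact h

open Classical in
theorem count_noninj {W ι : Type} [Fintype ι] (S : Finset W) :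
    ((Fintype.piFinset (fun _ : ι => S)).filter (fun g => ¬ Function.Injective g)).card ≤
        Fintype.card ι ^ 2 * S.card ^ (Fintype.card ι - 1) := by
  have hsub : (Fintype.piFinset (fun _ : ι => S)).filter (fun g => ¬ Function.Injective g) ⊆
      ((Finset.univ : Finset (ι × ι)).filter (fun q => q.1 ≠ q.2)).biUnion
      (fun q => (Fintype.piFinset (fun _ : ι => S)).filter (fun g => g q.1 = g q.2)) := by
    intro g hg
    obtain ⟨h1, h4⟩ := Finset.mem_filter.1 hg
    simp only [Function.Injective] at h4
    push Not at h4
    obtain ⟨a, b, h2, h3⟩ := h4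
    simp only [Finset.mem_biUnion, Finset.mem_filter]
    exact ⟨(a, b), ⟨Finset.mem_univ _, h3⟩, h1, h2⟩
  refine (Finset.card_le_card hsub).trans ?_
  refine (Finset.card_biUnion_le_card_mul _ _ (S.card ^ (Fintype.card ι - 1)) ?_).trans ?_
  · intro q hq
    exact count_eq S _ _ (Finset.mem_filter.1 hq).2
  · gcongr
    refine (Finset.card_filter_le _ _).trans ?_
    simp [sq]

open Classical in
/-- double counting -/
theorem double_count {W : Type} [Fintype W] (G : SimpleGraph W) (r s : ℕ)
    (T : Finset (Fin s → W)) :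
    ∑ x : Fin r → W, ((Fintype.piFinset (fun _ : Fin s => cN G x)).filter (fun y => y ∈ T)).card
      = ∑ y ∈ T, (cN G y).card ^ r := by
  have h := Finset.sum_card_bipartiteAbove_eq_sum_card_bipartiteBelow
    (s := (Finset.univ : Finset (Fin r → W))) (t := T)
    (fun x y => ∀ i j, G.Adj (x i) (y j))
  convert h using 2 with x hx y hy
  · congr 1
    ext y
    simp only [Finset.mem_filter, Fintype.mem_piFinset, mem_cN, Finset.mem_bipartiteAbove]
    constructor
    · rintro ⟨h1, h2⟩; exact ⟨h2, fun i j => h1 j i⟩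
    · rintro ⟨h1, h2⟩; exact ⟨fun i j => h2 j i, h1⟩
  · have : (cN G y).card ^ r = (Fintype.piFinset (fun _ : Fin r => cN G y)).card := by
      rw [Fintype.card_piFinset]; simp
    rw [this]
    congr 1
    ext x
    simp only [Fintype.mem_piFinset, mem_cN, Finset.mem_bipartiteBelow, Finset.mem_univ, true_and]
    constructor
    · intro h i j; exact (h i j).symm
    · intro h i j; exact (h i j).symm

theorem sum_cN {W : Type} [Fintype W] (G : SimpleGraph W) [DecidableRel G.Adj] (r : ℕ) :
    ∑ x : Fin r → W, (cN G x).card = ∑ v : W, G.degree v ^ r := by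
  classical
  have h := double_count G r 1 Finset.univ
  have e1 : ∀ x : Fin r → W, ((Fintype.piFinset (fun _ : Fin 1 => cN G x)).filter
      (fun y => y ∈ (Finset.univ : Finset (Fin 1 → W)))).card = (cN G x).card := by
    intro x
    simp [Fintype.card_piFinset]
  have h' : ∑ x : Fin r → W, (cN G x).card = ∑ y : Fin 1 → W, (cN G y).card ^ r := by
    rw [← h]
    refine Finset.sum_congr rfl fun x _ => ?_
    rw [← e1 x]
  rw [h']
  refine Fintype.sum_equiv (Equiv.funUnique (Fin 1) W) _ _ ?_
  intro y
  congr 1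
  rw [← SimpleGraph.card_neighborFinset_eq_degree]
  congr 1
  ext w
  simp [mem_cN]

theorem mean_pow {α : Type} [Fintype α] [Nonempty α] (f : α → ℝ) (hf : ∀ a, 0 ≤ f a) (D : ℝ)
    (hD : ∑ a, f a = D * Fintype.card α) (r : ℕ) (hr : 1 ≤ r) :
    D ^ r * Fintype.card α ≤ ∑ a, f a ^ r := by
  obtain ⟨n, rfl⟩ : ∃ n, r = n + 1 := ⟨r - 1, by omega⟩
  have h := pow_sum_div_card_le_sum_pow (s := (Finset.univ : Finset α)) (f := f)
    (fun a _ => hf a) n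
  refine le_trans (le_of_eq ?_) h
  have hN : (Fintype.card α : ℝ) ≠ 0 := by positivity
  rw [hD, Finset.card_univ]
  field_simp
  ring

open Classical in
theorem noninj_mass {W : Type} [Fintype W] [Nonempty W] (G : SimpleGraph W) (r : ℕ) (hr : 1 ≤ r)
    (D : ℝ) (hD0 : 0 < D)
    (hD : ∑ x : Fin r → W, ((cN G x).card : ℝ) = D * Fintype.card (Fin r → W)) :
    ∑ x ∈ Finset.univ.filter (fun x : Fin r → W => ¬ Function.Injective x),
      ((cN G x).card : ℝ) ^ r ≤ (2 * r ^ 2 / D) * ∑ x : Fin r → W, ((cN G x).card : ℝ) ^ r := by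
  have hM := mean_pow (fun x : Fin r → W => ((cN G x).card : ℝ)) (fun _ => by positivity) D hD r hr
  have h1 := double_count G r r (Finset.univ.filter (fun x : Fin r → W => ¬ Function.Injective x))
  have h1' : ∑ x ∈ Finset.univ.filter (fun x : Fin r → W => ¬ Function.Injective x),
      ((cN G x).card : ℝ) ^ r ≤ ∑ y : Fin r → W, (r : ℝ) ^ 2 * ((cN G y).card : ℝ) ^ (r - 1) := by
    have : ∑ x ∈ Finset.univ.filter (fun x : Fin r → W => ¬ Function.Injective x),
      (cN G x).card ^ r ≤ ∑ y : Fin r → W, r ^ 2 * (cN G y).card ^ (r - 1) := by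
      rw [← h1]
      apply Finset.sum_le_sum
      intro y _
      have := count_noninj (ι := Fin r) (cN G y)
      rw [Fintype.card_fin] at this
      refine le_trans (le_of_eq ?_) this
      congr 1
      ext z
      simp
    exact_mod_cast this
  have h2 : D * ∑ y : Fin r → W, ((cN G y).card : ℝ) ^ (r - 1) ≤
      2 * ∑ x : Fin r → W, ((cN G x).card : ℝ) ^ r := by
    have h3 : D * ∑ y : Fin r → W, ((cN G y).card : ℝ) ^ (r - 1) ≤
      ∑ x : Fin r → W, (D ^ r + ((cN G x).card : ℝ) ^ r) := by
      rw [Finset.mul_sum]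
      apply Finset.sum_le_sum
      intro y _
      obtain ⟨n, rfl⟩ : ∃ n, r = n + 1 := ⟨r - 1, by omega⟩
      simp only [Nat.add_sub_cancel]
      set d : ℝ := ((cN G y).card : ℝ)
      have hd : 0 ≤ d := by positivity
      rcases le_total d D with h | h
      · have : D * d ^ n ≤ D ^ (n + 1) := by rw [pow_succ']; gcongr
        have : 0 ≤ d ^ (n + 1) := by positivity
        linarith
      · have : D * d ^ n ≤ d ^ (n + 1) := by rw [pow_succ']; gcongr
        have : 0 ≤ D ^ (n + 1) := by positivity
        linarith
    rw [Finset.sum_add_distrib, Finset.sum_const, nsmul_eq_mul, Finset.card_univ] at h3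
    linarith
  rw [← Finset.mul_sum] at h1'
  refine h1'.trans ?_
  rw [div_mul_eq_mul_div, le_div_iff₀ hD0]
  have : (0:ℝ) ≤ (r:ℝ)^2 := by positivity
  nlinarith

open Classical in
theorem bad_mass {W : Type} [Fintype W] [Nonempty W] (G : SimpleGraph W) (r : ℕ) (hr : 1 ≤ r)
    (D ε δ : ℝ) (hD0 : 0 < D) (hε : 0 < ε) (hε1 : ε ≤ 1) (hδ : 0 < δ)
    (hD : ∑ x : Fin r → W, ((cN G x).card : ℝ) = D * Fintype.card (Fin r → W)) (l : ℕ) :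
    ∑ x ∈ badT G r (ε * D) δ l, ((cN G x).card : ℝ) ^ r ≤
      ((1 + 1 / δ) ^ l * (ε + 2 * r ^ 2 / D)) * ∑ x : Fin r → W, ((cN G x).card : ℝ) ^ r := by
  have hM := mean_pow (fun x : Fin r → W => ((cN G x).card : ℝ)) (fun _ => by positivity) D hD r hr
  set M := ∑ x : Fin r → W, ((cN G x).card : ℝ) ^ r with hMdef
  induction l with
  | zero =>
    have hN := noninj_mass G r hr D hD0 hD
    rw [badT, Finset.filter_or]
    have hL : ∑ x ∈ Finset.univ.filter (fun x : Fin r → W => ((cN G x).card : ℝ) < ε * D),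
        ((cN G x).card : ℝ) ^ r ≤ ε * M := by
      calc _ ≤ ∑ x ∈ Finset.univ.filter (fun x : Fin r → W => ((cN G x).card : ℝ) < ε * D),
              (ε * D) ^ r := by
            apply Finset.sum_le_sum
            intro x hx
            have := (Finset.mem_filter.1 hx).2
            gcongr
        _ ≤ ∑ x : Fin r → W, (ε * D) ^ r := by
            apply Finset.sum_le_sum_of_subset_of_nonneg (Finset.filter_subset _ _)
            intros; positivity
        _ = ε ^ r * (D ^ r * Fintype.card (Fin r → W)) := by
            rw [Finset.sum_const, nsmul_eq_mul, Finset.card_univ, mul_pow]; ring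
        _ ≤ ε ^ 1 * M := by
            have : ε ^ r ≤ ε ^ 1 := pow_le_pow_of_le_one hε.le hε1 hr
            gcongr
        _ = ε * M := by rw [pow_one]
    have hU := Finset.sum_union_inter
      (s₁ := Finset.univ.filter (fun x : Fin r → W => ¬ Function.Injective x))
      (s₂ := Finset.univ.filter (fun x : Fin r → W => ((cN G x).card : ℝ) < ε * D))
      (f := fun x => ((cN G x).card : ℝ) ^ r)
    have hI : 0 ≤ ∑ x ∈ Finset.univ.filter (fun x : Fin r → W => ¬ Function.Injective x) ∩
      Finset.univ.filter (fun x : Fin r → W => ((cN G x).card : ℝ) < ε * D),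
      ((cN G x).card : ℝ) ^ r := Finset.sum_nonneg (fun _ _ => by positivity)
    rw [pow_zero, one_mul, add_mul]
    linarith
  | succ l ih =>
    set η := (1 + 1 / δ) ^ l * (ε + 2 * r ^ 2 / D) with hη
    rw [badT]
    set Q := Finset.univ.filter (fun x : Fin r → W =>
      δ * ((cN G x).card : ℝ) ^ r <
        (((Fintype.piFinset (fun _ : Fin r => cN G x)).filter
          (fun y => y ∈ badT G r (ε * D) δ l)).card : ℝ)) with hQ
    have hL : δ * ∑ x ∈ Q, ((cN G x).card : ℝ) ^ r ≤ η * M := by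
      rw [Finset.mul_sum]
      calc _ ≤ ∑ x ∈ Q, (((Fintype.piFinset (fun _ : Fin r => cN G x)).filter
          (fun y => y ∈ badT G r (ε * D) δ l)).card : ℝ) := by
            apply Finset.sum_le_sum
            intro x hx
            exact (Finset.mem_filter.1 hx).2.le
        _ ≤ ∑ x : Fin r → W, (((Fintype.piFinset (fun _ : Fin r => cN G x)).filter
          (fun y => y ∈ badT G r (ε * D) δ l)).card : ℝ) := by
            apply Finset.sum_le_sum_of_subset_of_nonneg (Finset.subset_univ _)
            intros; positivity
        _ = ∑ x ∈ badT G r (ε * D) δ l, ((cN G x).card : ℝ) ^ r := by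
            exact_mod_cast double_count G r r (badT G r (ε * D) δ l)
        _ ≤ _ := ih
    have hU := Finset.sum_union_inter
      (s₁ := badT G r (ε * D) δ l) (s₂ := Q)
      (f := fun x => ((cN G x).card : ℝ) ^ r)
    have hI : 0 ≤ ∑ x ∈ badT G r (ε * D) δ l ∩ Q,
      ((cN G x).card : ℝ) ^ r := Finset.sum_nonneg (fun _ _ => by positivity)
    have hL' : ∑ x ∈ Q, ((cN G x).card : ℝ) ^ r ≤ (1 / δ) * (η * M) := by
      rw [one_div, inv_mul_eq_div, le_div_iff₀ hδ]; linarith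
    have e : (1 + 1 / δ) ^ (l + 1) * (ε + 2 * r ^ 2 / D) * M = η * M + 1 / δ * (η * M) := by
      rw [hη]; ring
    rw [e]
    linarith

theorem badT_mono {W : Type} [Fintype W] (G : SimpleGraph W) (r : ℕ) (τ δ : ℝ) :
    Monotone (badT G r τ δ) := by
  classical
  apply monotone_nat_of_le_succ
  intro l
  rw [badT]
  exact Finset.subset_union_left

theorem not_badT_zero {W : Type} [Fintype W] (G : SimpleGraph W) (r : ℕ) (τ δ : ℝ) (l : ℕ)
    (x : Fin r → W) (hx : x ∉ badT G r τ δ l) :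
    Function.Injective x ∧ τ ≤ (cN G x).card := by
  classical
  have : x ∉ badT G r τ δ 0 := fun h => hx (badT_mono G r τ δ (Nat.zero_le l) h)
  rw [badT, Finset.mem_filter] at this
  push Not at this
  exact this (Finset.mem_univ _)

open Classical in
/-- number of good ways of choosing one block -/
theorem ext_count {W A : Type} [Fintype W] [Fintype A] (G : SimpleGraph W) (r m h : ℕ)
    (τ δ : ℝ) (l : ℕ) (hδ : 0 < δ) (hmδ : m * δ ≤ 1 / 4) 
    (hrA : r ≤ Fintype.card A) (hA : 1 ≤ Fintype.card A) 
    (hτ : 4 * ((Fintype.card A : ℝ) ^ 2 + Fintype.card A * h) ≤ τ)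
    (x : Fin r → W) (hx : x ∉ badT G r τ δ (l + 1))
    (F : Finset W) (hF : F.card ≤ h)
    (I : Finset ℕ) (hI : I.card ≤ m) (e : ℕ → Fin r → A)
    (he : ∀ i ∈ I, Function.Injective (e i)) :
    ((cN G x).card : ℝ) ^ (Fintype.card A) / 2 ≤
    (((Fintype.piFinset (fun _ : A => cN G x)).filter (fun g => Function.Injective g ∧
      (∀ a, g a ∉ F) ∧ ∀ i ∈ I, g ∘ e i ∉ badT G r τ δ l)).card : ℝ) := by
  have hd := (not_badT_zero G r τ δ _ x hx).2
  set S := cN G x with hS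
  set t := Fintype.card A with ht
  set P := Fintype.piFinset (fun _ : A => S) with hP
  have hPc : (P.card : ℝ) = (S.card : ℝ) ^ t := by
    rw [hP, Fintype.card_piFinset, Finset.prod_const, Finset.card_univ]; simp [ht]
  have hbad : ((((Fintype.piFinset (fun _ : Fin r => S)).filter
          (fun y => y ∈ badT G r τ δ l)).card : ℝ)) ≤ δ * (S.card : ℝ) ^ r := by
    rw [badT, Finset.mem_union] at hx
    push Not at hx
    have := hx.2
    rw [Finset.mem_filter] at this
    push Not at this
    exact this (Finset.mem_univ _)
  have hcov : P ⊆ P.filter (fun g => Function.Injective g ∧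
      (∀ a, g a ∉ F) ∧ ∀ i ∈ I, g ∘ e i ∉ badT G r τ δ l) ∪
      (P.filter (fun g => ¬ Function.Injective g) ∪
      ((Finset.univ : Finset A).biUnion (fun a => P.filter (fun g => g a ∈ F)) ∪
      I.biUnion (fun i => P.filter (fun g => g ∘ e i ∈ badT G r τ δ l)))) := by
    intro g hg
    simp only [Finset.mem_union, Finset.mem_filter, Finset.mem_biUnion, hg, true_and,
      Finset.mem_univ]
    by_cases h1 : Function.Injective g
    · by_cases h2 : ∃ a, g a ∈ F
      · exact Or.inr (Or.inr (Or.inl h2))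
      · by_cases h3 : ∃ i ∈ I, g ∘ e i ∈ badT G r τ δ l
        · exact Or.inr (Or.inr (Or.inr h3))
        · push Not at h2 h3
          exact Or.inl ⟨h1, h2, h3⟩
    · exact Or.inr (Or.inl h1)
  have hc := (Finset.card_le_card hcov).trans ((Finset.card_union_le _ _).trans
    (Nat.add_le_add_left ((Finset.card_union_le _ _).trans
    (Nat.add_le_add_left (Finset.card_union_le _ _) _)) _))
  have b1 : ((P.filter (fun g => ¬ Function.Injective g)).card : ℝ) ≤
      (t : ℝ) ^ 2 * (S.card : ℝ) ^ (t - 1) := by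
    exact_mod_cast count_noninj S
  have b2 : (((Finset.univ : Finset A).biUnion (fun a => P.filter (fun g => g a ∈ F))).card : ℝ) ≤
      t * (h * (S.card : ℝ) ^ (t - 1)) := by
    have : ((Finset.univ : Finset A).biUnion (fun a => P.filter (fun g => g a ∈ F))).card ≤
      t * (h * S.card ^ (t - 1)) := by
      apply Finset.card_biUnion_le_card_mul
      intro a _
      refine (count_hit S F a).trans ?_
      gcongr
    exact_mod_cast this
  have b3 : ((I.biUnion (fun i => P.filter (fun g => g ∘ e i ∈ badT G r τ δ l))).card : ℝ) ≤
      m * (δ * (S.card : ℝ) ^ t) := by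
    have h1 : ((I.biUnion (fun i => P.filter (fun g => g ∘ e i ∈ badT G r τ δ l))).card : ℝ) ≤
      ∑ i ∈ I, ((P.filter (fun g => g ∘ e i ∈ badT G r τ δ l)).card : ℝ) := by
      exact_mod_cast Finset.card_biUnion_le
    refine h1.trans ?_
    have h2 : ∀ i ∈ I, ((P.filter (fun g => g ∘ e i ∈ badT G r τ δ l)).card : ℝ) ≤
        δ * (S.card : ℝ) ^ t := by
      intro i hi
      have h3 := proj_count (e i) (he i hi) S (badT G r τ δ l : Set (Fin r → W))
      simp only [Finset.mem_coe, Fintype.card_fin] at h3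
      have h4 : ((P.filter (fun g => g ∘ e i ∈ badT G r τ δ l)).card : ℝ) ≤
        (((Fintype.piFinset (fun _ : Fin r => S)).filter
          (fun y => y ∈ badT G r τ δ l)).card : ℝ) * (S.card : ℝ) ^ (t - r) := by
        have h3' : (P.filter (fun g => g ∘ e i ∈ badT G r τ δ l)).card ≤
          ((Fintype.piFinset (fun _ : Fin r => S)).filter
          (fun y => y ∈ badT G r τ δ l)).card * S.card ^ (t - r) := by
          convert h3
        exact_mod_cast h3'
      refine h4.trans ?_
      have h5 : (S.card : ℝ) ^ t = (S.card : ℝ) ^ r * (S.card : ℝ) ^ (t - r) := by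
        rw [← pow_add]; congr 1; omega
      rw [h5, ← mul_assoc]
      gcongr
    refine (Finset.sum_le_sum h2).trans ?_
    rw [Finset.sum_const, nsmul_eq_mul]
    have : (I.card : ℝ) ≤ m := by exact_mod_cast hI
    gcongr
  have hc' : (P.card : ℝ) ≤ ((P.filter (fun g => Function.Injective g ∧
      (∀ a, g a ∉ F) ∧ ∀ i ∈ I, g ∘ e i ∉ badT G r τ δ l)).card : ℝ) +
      (((P.filter (fun g => ¬ Function.Injective g)).card : ℝ) +
      ((((Finset.univ : Finset A).biUnion (fun a => P.filter (fun g => g a ∈ F))).card : ℝ) +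
      ((I.biUnion (fun i => P.filter (fun g => g ∘ e i ∈ badT G r τ δ l))).card : ℝ))) := by
    exact_mod_cast hc
  rw [hPc] at hc'
  have hpow : (S.card : ℝ) ^ t = S.card * (S.card : ℝ) ^ (t - 1) := by
    rw [← pow_succ']; congr 1; omega
  have hp0 : 0 ≤ (S.card : ℝ) ^ (t - 1) := by positivity
  have k1 : 4 * (((t : ℝ) ^ 2 + t * h) * (S.card : ℝ) ^ (t - 1)) ≤ (S.card : ℝ) ^ t := by
    rw [hpow, ← mul_assoc]
    exact mul_le_mul_of_nonneg_right (hτ.trans hd) hp0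
  have k2 : m * (δ * (S.card : ℝ) ^ t) ≤ 1 / 4 * (S.card : ℝ) ^ t := by
    rw [← mul_assoc]
    gcongr
  linarith

open Classical in
/-- partial embeddings of the first blocks -/
noncomputable def partE {VH W : Type} [Fintype VH] [Fintype W] (G : SimpleGraph W) (r m : ℕ)
    (τ δ : ℝ) (β : VH → ℕ) (e : ℕ → Fin r → VH) (p : ℕ → ℕ) (w0 : W) (k : ℕ) :
    Finset (VH → W) :=
  Finset.univ.filter (fun f => (∀ v, k < β v → f v = w0) ∧ Set.InjOn f {v | β v ≤ k} ∧
    (∀ i, 1 ≤ i → i ≤ k → ∀ a v, β v = i → G.Adj (f (e i a)) (f v)) ∧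
    (∀ i, 1 ≤ i → i ≤ m → p i ≤ k → f ∘ e i ∉ badT G r τ δ (m + 1 - i)))

theorem partE_step {VH W : Type} [Fintype VH] [Fintype W] (G : SimpleGraph W) (r t m : ℕ)
    (τ δ : ℝ) (β : VH → ℕ) (e : ℕ → Fin r → VH) (p : ℕ → ℕ) (w0 : W)
    (hr : 1 ≤ r) (hrt : r ≤ t)
    (he : ∀ i, 1 ≤ i → i ≤ m → Function.Injective (e i))
    (hp : ∀ i, 1 ≤ i → i ≤ m → p i < i)
    (hep : ∀ i, 1 ≤ i → i ≤ m → ∀ a, β (e i a) = p i)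
    (hcard : ∀ i, 1 ≤ i → i ≤ m → Nat.card {v // β v = i} = t)
    (hδ : 0 < δ) (hmδ : m * δ ≤ 1 / 4)
    (hτ : 4 * ((t : ℝ) ^ 2 + t * Fintype.card VH) ≤ τ)
    (k : ℕ) (hk : k < m) :
    ∑ f ∈ partE G r m τ δ β e p w0 k, ((cN G (f ∘ e (k + 1))).card : ℝ) ^ t / 2 ≤
      ((partE G r m τ δ β e p w0 (k + 1)).card : ℝ) := by
  classical
  let A := {v // β v = k + 1}
  have hA : Fintype.card A = t := by
    rw [← Nat.card_eq_fintype_card]; exact hcard (k + 1) (by omega) (by omega)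
  obtain ⟨a0⟩ : Nonempty A := Fintype.card_pos_iff.1 (by omega)
  let I := (Finset.Icc 1 m).filter (fun i => p i = k + 1)
  have hIc : I.card ≤ m := (Finset.card_filter_le _ _).trans (by simp)
  let e' : ℕ → Fin r → A := fun i a => if h : β (e i a) = k + 1 then ⟨e i a, h⟩ else a0
  have he'v : ∀ i ∈ I, ∀ a, (e' i a).1 = e i a := by
    intro i hi a
    simp only [I, Finset.mem_filter, Finset.mem_Icc] at hi
    have : β (e i a) = k + 1 := by rw [hep i hi.1.1 hi.1.2, hi.2]
    simp only [e', dif_pos this]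
  have he'i : ∀ i ∈ I, Function.Injective (e' i) := by
    intro i hi a b hab
    have h1 := he'v i hi a
    have h2 := he'v i hi b
    have hi' := hi
    simp only [I, Finset.mem_filter, Finset.mem_Icc] at hi'
    apply he i hi'.1.1 hi'.1.2
    rw [← h1, ← h2, hab]
  let F : (VH → W) → Finset W := fun f => (Finset.univ.filter (fun v => β v ≤ k)).image f
  have hF : ∀ f, (F f).card ≤ Fintype.card VH := fun f =>
    Finset.card_image_le.trans (Finset.card_le_univ _)
  let Q : (VH → W) → Finset (A → W) := fun f =>
    (Fintype.piFinset (fun _ : A => cN G (f ∘ e (k + 1)))).filter (fun g => Function.Injective g ∧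
      (∀ a, g a ∉ F f) ∧ ∀ i ∈ I, g ∘ e' i ∉ badT G r τ δ (m - k - 1))
  have hQ : ∀ f ∈ partE G r m τ δ β e p w0 k,
      ((cN G (f ∘ e (k + 1))).card : ℝ) ^ t / 2 ≤ ((Q f).card : ℝ) := by
    intro f hf
    rw [partE, Finset.mem_filter] at hf
    have hpk := hp (k + 1) (by omega) (by omega)
    have hx := hf.2.2.2.2 (k + 1) (by omega) (by omega) (by omega)
    have e1 : m + 1 - (k + 1) = (m - k - 1) + 1 := by omega
    rw [e1] at hx
    have := ext_count G r m (Fintype.card VH) τ δ (m - k - 1) hδ hmδ (A := A) (by omega) (by omega)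
      (by rw [hA]; exact hτ) _ hx (F f) (hF f) I hIc e' he'i
    rw [hA] at this
    convert this
  refine (Finset.sum_le_sum hQ).trans ?_
  rw [← Nat.cast_sum, Nat.cast_le, ← Finset.card_sigma]
  let glue : (Σ _ : VH → W, A → W) → VH → W :=
    fun q v => if h : β v = k + 1 then q.2 ⟨v, h⟩ else q.1 v
  have g1 : ∀ q v (h : β v = k + 1), glue q v = q.2 ⟨v, h⟩ := fun q v h => dif_pos h
  have g2 : ∀ q v (_ : β v ≠ k + 1), glue q v = q.1 v := fun q v h => dif_neg h
  apply Finset.card_le_card_of_injOn glue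
  · rintro ⟨f, g⟩ hq
    rw [Finset.mem_coe, Finset.mem_sigma] at hq
    obtain ⟨hf, hg⟩ := hq
    simp only at hf hg
    rw [partE, Finset.mem_filter] at hf
    obtain ⟨-, f1, f2, f3, f4⟩ := hf
    rw [Finset.mem_filter] at hg
    obtain ⟨hg0, hg1, hg2, hg3⟩ := hg
    rw [Fintype.mem_piFinset] at hg0
    have hFm : ∀ v, β v ≤ k → f v ∈ F f := fun v hv =>
      Finset.mem_image_of_mem _ (Finset.mem_filter.2 ⟨Finset.mem_univ _, hv⟩)
    rw [Finset.mem_coe, partE, Finset.mem_filter]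
    refine ⟨Finset.mem_univ _, ?_, ?_, ?_, ?_⟩
    · intro v hv
      rw [g2 _ _ (by omega)]
      exact f1 v (by omega)
    · intro u hu v hv huv
      have hu' : β u ≤ k + 1 := hu
      have hv' : β v ≤ k + 1 := hv
      by_cases h1 : β u = k + 1
      · by_cases h2 : β v = k + 1
        · rw [g1 _ _ h1, g1 _ _ h2] at huv
          exact congrArg Subtype.val (hg1 huv)
        · rw [g1 _ _ h1, g2 _ _ h2] at huv
          simp only at huv
          exact absurd (hFm v (by omega)) (huv ▸ hg2 _)
      · by_cases h2 : β v = k + 1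
        · rw [g2 _ _ h1, g1 _ _ h2] at huv
          simp only at huv
          exact absurd (hFm u (by omega)) (huv ▸ hg2 _)
        · rw [g2 _ _ h1, g2 _ _ h2] at huv
          exact f2 (show β u ≤ k by omega) (show β v ≤ k by omega) huv
    · intro i hi1 hik a v hv
      have hb := hep i hi1 (by omega) a
      have hpi := hp i hi1 (by omega)
      rw [g2 _ (e i a) (by omega)]
      by_cases h1 : i = k + 1
      · subst h1
        rw [g1 _ _ hv]
        exact (mem_cN _ _ _).1 (hg0 ⟨v, hv⟩) a
      · rw [g2 _ _ (by omega)]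
        exact f3 i hi1 (by omega) a v hv
    · intro i hi1 him hpk
      have hpi := hp i hi1 him
      by_cases h1 : p i = k + 1
      · have hiI : i ∈ I := Finset.mem_filter.2 ⟨Finset.mem_Icc.2 ⟨hi1, him⟩, h1⟩
        have e1 : glue ⟨f, g⟩ ∘ e i = g ∘ e' i := by
          funext a
          have hb := hep i hi1 him a
          simp only [Function.comp]
          rw [g1 _ _ (hb.trans h1)]
          exact congrArg g (Subtype.ext (he'v i hiI a).symm)
        rw [e1]
        exact fun h => hg3 i hiI (badT_mono G r τ δ (by omega) h)
      · have e1 : glue ⟨f, g⟩ ∘ e i = f ∘ e i := by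
          funext a
          have hb := hep i hi1 him a
          simp only [Function.comp]
          rw [g2 _ _ (by omega)]
        rw [e1]
        exact f4 i hi1 him (by omega)
  · rintro ⟨f, g⟩ hq ⟨f', g'⟩ hq' heq
    rw [Finset.mem_coe, Finset.mem_sigma] at hq hq'
    have hf := hq.1
    have hf' := hq'.1
    simp only [partE, Finset.mem_filter] at hf hf'
    have hfe : f = f' := by
      funext v
      by_cases h1 : β v = k + 1
      · rw [hf.2.1 v (by omega), hf'.2.1 v (by omega)]
      · have := congrFun heq v
        rwa [g2 _ _ h1, g2 _ _ h1] at this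
    have hge : g = g' := by
      funext a
      have := congrFun heq a.1
      rwa [g1 _ _ a.2, g1 _ _ a.2] at this
    rw [hfe, hge]

open Classical in
theorem partE_zero {VH W : Type} [Fintype VH] [Fintype W] (G : SimpleGraph W) (r t m : ℕ)
    (τ δ : ℝ) (β : VH → ℕ) (e : ℕ → Fin r → VH) (p : ℕ → ℕ) (w0 : W)
    (hm : 1 ≤ m)
    (he : Function.Injective (e 1))
    (hp : p 1 = 0)
    (hep : ∀ i, 1 ≤ i → i ≤ m → ∀ a, β (e i a) = p i)
    (hp1 : ∀ i, 1 ≤ i → i ≤ m → p i = 0 → i = 1)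
    (hs : ∀ v, β v = 0 → ∃ a, e 1 a = v) :
    ∑ x ∈ (Finset.univ \ badT G r τ δ m), ((cN G x).card : ℝ) ^ t / 2 ≤
    ∑ f ∈ partE G r m τ δ β e p w0 0, ((cN G (f ∘ e 1)).card : ℝ) ^ t / 2 := by
  let φ : (Fin r → W) → VH → W := fun x v => if h : β v = 0 then x (hs v h).choose else w0
  have hφ : ∀ x, φ x ∘ e 1 = x := by
    intro x
    funext a
    have h0 : β (e 1 a) = 0 := by rw [hep 1 le_rfl hm, hp]
    simp only [Function.comp, φ, dif_pos h0]
    congr 1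
    exact he (hs _ h0).choose_spec
  have hinj : Function.Injective φ := by
    intro x y h
    rw [← hφ x, ← hφ y, h]
  have h1 : ∑ x ∈ (Finset.univ \ badT G r τ δ m), ((cN G x).card : ℝ) ^ t / 2 =
      ∑ f ∈ (Finset.univ \ badT G r τ δ m).image φ, ((cN G (f ∘ e 1)).card : ℝ) ^ t / 2 := by
    rw [Finset.sum_image (fun x _ y _ h => hinj h)]
    refine Finset.sum_congr rfl fun x _ => ?_
    rw [hφ]
  rw [h1]
  apply Finset.sum_le_sum_of_subset_of_nonneg
  · intro f hf
    obtain ⟨x, hx, rfl⟩ := Finset.mem_image.1 hf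
    have hx' : x ∉ badT G r τ δ m := (Finset.mem_sdiff.1 hx).2
    rw [partE, Finset.mem_filter]
    refine ⟨Finset.mem_univ _, ?_, ?_, ?_, ?_⟩
    · intro v hv
      exact dif_neg (by omega)
    · intro u hu v hv huv
      have hu' : β u = 0 := Nat.le_zero.1 hu
      have hv' : β v = 0 := Nat.le_zero.1 hv
      obtain ⟨a, rfl⟩ := hs u hu'
      obtain ⟨b, rfl⟩ := hs v hv'
      have ha := congrFun (hφ x) a
      have hb := congrFun (hφ x) b
      simp only [Function.comp] at ha hb
      rw [ha, hb] at huv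
      rw [(not_badT_zero G r τ δ m x hx').1 huv]
    · intro i h1 h2; omega
    · intro i h1 h2 h3
      obtain rfl := hp1 i h1 h2 (by omega)
      rw [hφ]
      exact hx'
  · intros; positivity

set_option maxHeartbeats 400000 in
open Classical in
theorem partE_bound {VH W : Type} [Fintype VH] [Fintype W] [Nonempty W] (G : SimpleGraph W)
    (r t m : ℕ)
    (D ε δ : ℝ) (β : VH → ℕ) (e : ℕ → Fin r → VH) (p : ℕ → ℕ) (w0 : W)
    (hr : 1 ≤ r) (hrt : r ≤ t) (hm : 1 ≤ m)
    (he : ∀ i, 1 ≤ i → i ≤ m → Function.Injective (e i))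
    (hp : ∀ i, 1 ≤ i → i ≤ m → p i < i)
    (hep : ∀ i, 1 ≤ i → i ≤ m → ∀ a, β (e i a) = p i)
    (hp1 : ∀ i, 1 ≤ i → i ≤ m → p i = 0 → i = 1)
    (hs : ∀ v, β v = 0 → ∃ a, e 1 a = v)
    (hcard : ∀ i, 1 ≤ i → i ≤ m → Nat.card {v // β v = i} = t)
    (hδ : 0 < δ) (hmδ : m * δ ≤ 1 / 4) (hε : 0 < ε) (hε1 : ε ≤ 1) (hD0 : 0 < D)
    (hτ : 4 * ((t : ℝ) ^ 2 + t * Fintype.card VH) ≤ ε * D)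
    (hη : (1 + 1 / δ) ^ m * (ε + 2 * r ^ 2 / D) ≤ 1 / 2)
    (hD : ∑ x : Fin r → W, ((cN G x).card : ℝ) = D * Fintype.card (Fin r → W))
    (k : ℕ) (hk : k + 1 ≤ m) :
    (Fintype.card W : ℝ) ^ r * (ε * D) ^ (t * (k + 1)) / 2 ^ (k + 2) ≤
      ((partE G r m (ε * D) δ β e p w0 (k + 1)).card : ℝ) := by
  induction k with
  | zero =>
    have h0 := partE_zero G r t m (ε * D) δ β e p w0 hm (he 1 le_rfl hm)
      (by have := hp 1 le_rfl hm; omega) hep hp1 hs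
    have h1 := partE_step G r t m (ε * D) δ β e p w0 hr hrt he hp hep hcard hδ hmδ hτ 0 hk
    refine le_trans ?_ (h0.trans h1)
    have hb := bad_mass G r hr D ε δ hD0 hε hε1 hδ hD m
    have hM := mean_pow (fun x : Fin r → W => ((cN G x).card : ℝ)) (fun _ => by positivity)
      D hD r hr
    set M := ∑ x : Fin r → W, ((cN G x).card : ℝ) ^ r with hMdef
    have hM0 : 0 ≤ M := Finset.sum_nonneg (fun _ _ => by positivity)
    have hb' : ∑ x ∈ badT G r (ε * D) δ m, ((cN G x).card : ℝ) ^ r ≤ 1 / 2 * M :=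
      hb.trans (mul_le_mul_of_nonneg_right hη hM0)
    have hsd := Finset.sum_sdiff (f := fun x => ((cN G x).card : ℝ) ^ r)
      (Finset.subset_univ (badT G r (ε * D) δ m))
    have hg : 1 / 2 * M ≤ ∑ x ∈ (Finset.univ \ badT G r (ε * D) δ m), ((cN G x).card : ℝ) ^ r := by
      linarith
    have hsplit : (ε * D) ^ t = (ε * D) ^ (t - r) * (ε * D) ^ r := by
      rw [← pow_add]; congr 1; omega
    have hcW : (Fintype.card (Fin r → W) : ℝ) = (Fintype.card W : ℝ) ^ r := by
      rw [Fintype.card_fun, Fintype.card_fin, Nat.cast_pow]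
    have hεr : ε ^ r ≤ 1 := pow_le_one₀ hε.le hε1
    calc (Fintype.card W : ℝ) ^ r * (ε * D) ^ (t * (0 + 1)) / 2 ^ (0 + 2)
        = (ε * D) ^ (t - r) / 2 * (1 / 2 * (ε ^ r * (D ^ r * (Fintype.card W : ℝ) ^ r))) := by
          rw [zero_add, mul_one, hsplit, mul_pow ε D r]; ring
      _ ≤ (ε * D) ^ (t - r) / 2 * (1 / 2 * (1 * M)) := by
          rw [hcW] at hM
          gcongr
      _ ≤ (ε * D) ^ (t - r) / 2 *
          ∑ x ∈ (Finset.univ \ badT G r (ε * D) δ m), ((cN G x).card : ℝ) ^ r := by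
          rw [one_mul]; gcongr
      _ ≤ _ := by
          rw [Finset.mul_sum]
          apply Finset.sum_le_sum
          intro x hx
          have hd := (not_badT_zero G r _ δ m x (Finset.mem_sdiff.1 hx).2).2
          have e1 : ((cN G x).card : ℝ) ^ t =
              ((cN G x).card : ℝ) ^ (t - r) * ((cN G x).card : ℝ) ^ r := by
            rw [← pow_add]; congr 1; omega
          rw [e1, div_mul_eq_mul_div]
          gcongr
  | succ k ih =>
    have h1 := partE_step G r t m (ε * D) δ β e p w0 hr hrt he hp hep hcard hδ hmδ hτ (k + 1) hk
    refine le_trans ?_ h1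
    have hge : ∑ f ∈ partE G r m (ε * D) δ β e p w0 (k + 1), (ε * D) ^ t / 2 ≤
        ∑ f ∈ partE G r m (ε * D) δ β e p w0 (k + 1),
          ((cN G (f ∘ e (k + 1 + 1))).card : ℝ) ^ t / 2 := by
      apply Finset.sum_le_sum
      intro f hf
      rw [partE, Finset.mem_filter] at hf
      have hpk := hp (k + 1 + 1) (by omega) (by omega)
      have hx := hf.2.2.2.2 (k + 1 + 1) (by omega) (by omega) (by omega)
      have hd := (not_badT_zero G r _ δ _ _ hx).2
      gcongr
    refine le_trans ?_ hge
    rw [Finset.sum_const, nsmul_eq_mul]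
    have := ih (by omega)
    calc _ = (Fintype.card W : ℝ) ^ r * (ε * D) ^ (t * (k + 1)) / 2 ^ (k + 2) *
          ((ε * D) ^ t / 2) := by
            rw [mul_add t (k + 1) 1, pow_add (ε * D), mul_one]; ring
      _ ≤ _ := by gcongr

/-- combinatorial data extracted from a block representation -/
theorem block_data {VH : Type} [Fintype VH] [DecidableEq VH]
    (H : SimpleGraph VH) (r t m : ℕ) (hr : 1 ≤ r)
    (R : BlockRep H m) (hB0 : (R.B 0).card = r)
    (hBt : ∀ i : Fin (m + 1), 1 ≤ (i : ℕ) → (R.B i).card = t)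
    (hPr : ∀ i : Fin (m + 1), 2 ≤ (i : ℕ) → (R.P i).card = r) :
    ∃ (β : VH → ℕ) (e : ℕ → Fin r → VH) (p : ℕ → ℕ),
      (∀ v, β v ≤ m) ∧
      (∀ i, 1 ≤ i → i ≤ m → Function.Injective (e i)) ∧
      (∀ i, 1 ≤ i → i ≤ m → p i < i) ∧
      (∀ i, 1 ≤ i → i ≤ m → ∀ a, β (e i a) = p i) ∧
      (∀ i, 1 ≤ i → i ≤ m → p i = 0 → i = 1) ∧
      (∀ v, β v = 0 → ∃ a, e 1 a = v) ∧
      (∀ i, 1 ≤ i → i ≤ m → Nat.card {v // β v = i} = t) ∧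
      Fintype.card VH = r + t * m ∧
      (∀ u v, H.Adj u v ↔ ∃ i, 1 ≤ i ∧ i ≤ m ∧
        (((∃ a, e i a = u) ∧ β v = i) ∨ ((∃ a, e i a = v) ∧ β u = i))) := by
  classical
  have hm := R.hm
  choose b hb hbu using R.partition
  simp only at hb hbu
  have hmem : ∀ v i, v ∈ R.B i ↔ b v = i := fun v i =>
    ⟨fun h => (hbu v i h).symm, fun h => h ▸ hb v⟩
  have hmemN : ∀ v (i : ℕ) (hi : i < m + 1), v ∈ R.B ⟨i, hi⟩ ↔ (b v : ℕ) = i := by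
    intro v i hi
    rw [hmem, Fin.ext_iff]
  have h1 : (1 : Fin (m + 1)) = ⟨1, by omega⟩ := by
    apply Fin.ext
    rw [Fin.val_one']
    exact Nat.mod_eq_of_lt (by omega)
  have h0 : (0 : Fin (m + 1)) = ⟨0, by omega⟩ := rfl
  obtain ⟨v0, -⟩ := R.B_nonempty 0
  have hPc : ∀ (i : ℕ) (h : i < m + 1), 1 ≤ i → (R.P ⟨i, h⟩).card = r := by
    intro i h hi
    by_cases h2 : 2 ≤ i
    · exact hPr ⟨i, h⟩ h2
    · obtain rfl : i = 1 := by omega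
      rw [← h1, R.P_one, hB0]
  have hex : ∀ i : ℕ, ∃ ei : Fin r → VH, ∀ h : i < m + 1, 1 ≤ i →
      Function.Injective ei ∧ ∀ v, v ∈ R.P ⟨i, h⟩ ↔ ∃ a, ei a = v := by
    intro i
    by_cases hi : i < m + 1 ∧ 1 ≤ i
    · let E := (Finset.equivFinOfCardEq (hPc i hi.1 hi.2)).symm
      refine ⟨fun a => (E a).1, fun h _ => ⟨?_, ?_⟩⟩
      · intro a c hac
        exact E.injective (Subtype.ext hac)
      · intro v
        constructor
        · intro hv
          exact ⟨E.symm ⟨v, hv⟩, by simp⟩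
        · rintro ⟨a, rfl⟩
          exact (E a).2
    · exact ⟨fun _ => v0, fun h h' => absurd ⟨h, h'⟩ hi⟩
  choose e he using hex
  let p : ℕ → ℕ := fun i => if h : 2 ≤ i ∧ i < m + 1 then (R.γ ⟨i, h.2⟩ : ℕ) else 0
  have hp2 : ∀ i (h2 : 2 ≤ i) (h : i < m + 1), p i = (R.γ ⟨i, h⟩ : ℕ) :=
    fun i h2 h => dif_pos ⟨h2, h⟩
  have hp1 : p 1 = 0 := dif_neg (by omega)
  have hcB : ∀ i (h : i < m + 1), Nat.card {v // (b v : ℕ) = i} = (R.B ⟨i, h⟩).card := by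
    intro i h
    rw [Nat.card_eq_fintype_card, Fintype.card_subtype]
    congr 1
    ext v
    rw [hmemN]; simp
  refine ⟨fun v => (b v : ℕ), e, p, ?_, ?_, ?_, ?_, ?_, ?_, ?_, ?_, ?_⟩
  · intro v; exact Nat.lt_succ_iff.1 (b v).2
  · intro i hi him
    exact (he i (by omega) hi).1
  · intro i hi him
    by_cases h2 : 2 ≤ i
    · rw [hp2 i h2 (by omega)]
      exact (R.γ_lt ⟨i, by omega⟩ h2).2
    · obtain rfl : i = 1 := by omega
      omega
  · intro i hi him a
    have hin := ((he i (by omega) hi).2 (e i a)).2 ⟨a, rfl⟩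
    by_cases h2 : 2 ≤ i
    · rw [hp2 i h2 (by omega)]
      have := R.P_subset ⟨i, by omega⟩ h2 hin
      rw [hmem] at this
      simp only [this]
    · obtain rfl : i = 1 := by omega
      rw [← h1, R.P_one, hmem] at hin
      simp only [hin, hp1]
      rfl
  · intro i hi him hpi
    by_contra hne
    have h2 : 2 ≤ i := by omega
    have := (R.γ_lt ⟨i, by omega⟩ h2).1
    rw [hp2 i h2 (by omega)] at hpi
    omega
  · intro v hv
    apply ((he 1 (by omega) le_rfl).2 v).1
    rw [← h1, R.P_one, hmem]
    exact Fin.ext hv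
  · intro i hi him
    rw [hcB i (by omega)]
    exact hBt ⟨i, by omega⟩ hi
  · have hs : Fintype.card VH = ∑ i : Fin (m + 1), (R.B i).card := by
      rw [← Finset.card_univ, Finset.card_eq_sum_card_fiberwise (f := b) (t := Finset.univ)
        (fun _ _ => Finset.mem_coe.2 (Finset.mem_univ _))]
      refine Finset.sum_congr rfl fun i _ => ?_
      congr 1
      ext v
      rw [hmem]; simp
    rw [hs, Fin.sum_univ_succ, hB0]
    congr 1
    rw [Finset.sum_congr rfl (fun i _ => hBt (Fin.succ i) (by simp))]
    simp [mul_comm]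
  · intro u v
    rw [R.adj_iff]
    constructor
    · rintro ⟨⟨i, hi⟩, hi1, h⟩
      simp only at hi1
      refine ⟨i, hi1, by omega, ?_⟩
      rwa [(he i hi hi1).2, (he i hi hi1).2, hmemN, hmemN] at h
    · rintro ⟨i, hi1, him, h⟩
      refine ⟨⟨i, by omega⟩, hi1, ?_⟩
      rwa [(he i (by omega) hi1).2, (he i (by omega) hi1).2, hmemN, hmemN]

theorem edge_lower {VH : Type} [Fintype VH] (H : SimpleGraph VH) (r t m : ℕ)
    (β : VH → ℕ) (e : ℕ → Fin r → VH) (p : ℕ → ℕ)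
    (hβ : ∀ v, β v ≤ m) (hm : 1 ≤ m)
    (he : ∀ i, 1 ≤ i → i ≤ m → Function.Injective (e i))
    (hp : ∀ i, 1 ≤ i → i ≤ m → p i < i)
    (hep : ∀ i, 1 ≤ i → i ≤ m → ∀ a, β (e i a) = p i)
    (hs : ∀ v, β v = 0 → ∃ a, e 1 a = v)
    (hh : Fintype.card VH = r + t * m)
    (hadj : ∀ u v, H.Adj u v ↔ ∃ i, 1 ≤ i ∧ i ≤ m ∧
        (((∃ a, e i a = u) ∧ β v = i) ∨ ((∃ a, e i a = v) ∧ β u = i))) :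
    r * (t * m) ≤ Nat.card H.edgeSet := by
  classical
  let A := {v // ¬ β v = 0}
  have hA : t * m ≤ Fintype.card A := by
    have h1 : Fintype.card {v // β v = 0} ≤ r := by
      have : Function.Injective (fun v : {v // β v = 0} => (hs v.1 v.2).choose) := by
        intro u v h
        apply Subtype.ext
        rw [← (hs u.1 u.2).choose_spec, ← (hs v.1 v.2).choose_spec]
        exact congrArg _ h
      simpa using Fintype.card_le_of_injective _ this
    have h2 := Fintype.card_subtype_compl (fun v => β v = 0)
    have h3 : Fintype.card A = Fintype.card VH - Fintype.card {v // β v = 0} := h2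
    omega
  let φ : Fin r × A → H.edgeSet := fun q => ⟨s(e (β q.2.1) q.1, q.2.1), by
    rw [SimpleGraph.mem_edgeSet, hadj]
    have := q.2.2
    exact ⟨β q.2.1, by omega, hβ _, Or.inl ⟨⟨_, rfl⟩, rfl⟩⟩⟩
  have hφ : Function.Injective φ := by
    rintro ⟨a, u, hu⟩ ⟨c, v, hv⟩ h
    have h' : s(e (β u) a, u) = s(e (β v) c, v) := congrArg Subtype.val h
    have bu := hep (β u) (by omega) (hβ _) a
    have bv := hep (β v) (by omega) (hβ _) c
    have pu := hp (β u) (by omega) (hβ _)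
    have pv := hp (β v) (by omega) (hβ _)
    rw [Sym2.eq_iff] at h'
    rcases h' with ⟨h1, h2⟩ | ⟨h1, h2⟩
    · subst h2
      have := he (β u) (by omega) (hβ _) h1
      subst this
      rfl
    · rw [h1] at bu
      rw [← h2] at bv
      omega
  have := Nat.card_le_card_of_injective φ hφ
  rw [Nat.card_prod, Nat.card_fin, Nat.card_eq_fintype_card] at this
  exact (Nat.mul_le_mul_left r hA).trans this

open Classical in
theorem partE_hom {VH W : Type} [Fintype VH] [Fintype W] (H : SimpleGraph VH)
    (G : SimpleGraph W) (r m : ℕ)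
    (τ δ : ℝ) (β : VH → ℕ) (e : ℕ → Fin r → VH) (p : ℕ → ℕ) (w0 : W)
    (hβ : ∀ v, β v ≤ m)
    (hadj : ∀ u v, H.Adj u v ↔ ∃ i, 1 ≤ i ∧ i ≤ m ∧
        (((∃ a, e i a = u) ∧ β v = i) ∨ ((∃ a, e i a = v) ∧ β u = i))) :
    (partE G r m τ δ β e p w0 m).card ≤ Nat.card {f : H →g G // Function.Injective f} := by
  have hP : ∀ f ∈ partE G r m τ δ β e p w0 m, Function.Injective f ∧
      ∀ u v, H.Adj u v → G.Adj (f u) (f v) := by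
    intro f hf
    rw [partE, Finset.mem_filter] at hf
    obtain ⟨-, -, h2, h3, -⟩ := hf
    refine ⟨fun u v h => h2 (hβ u) (hβ v) h, fun u v h => ?_⟩
    obtain ⟨i, hi1, him, h | h⟩ := (hadj u v).1 h
    · obtain ⟨⟨a, rfl⟩, hv⟩ := h
      exact h3 i hi1 him a v hv
    · obtain ⟨⟨a, rfl⟩, hv⟩ := h
      exact (h3 i hi1 him a u hv).symm
  haveI : Finite (H →g G) := Finite.of_injective (fun f : H →g G => (f : VH → W))
    DFunLike.coe_injective
  let φ : {f // f ∈ partE G r m τ δ β e p w0 m} → {f : H →g G // Function.Injective f} :=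
    fun f => ⟨⟨f.1, fun {u v} h => (hP f.1 f.2).2 u v h⟩, (hP f.1 f.2).1⟩
  have hφ : Function.Injective φ := by
    intro f g h
    apply Subtype.ext
    exact congrArg (fun q : {f : H →g G // Function.Injective f} => (q.1 : VH → W)) h
  have := Nat.card_le_card_of_injective φ hφ
  rwa [Nat.card_eq_fintype_card, Fintype.card_coe] at this

theorem deg_mean {W : Type} [Fintype W] [Nonempty W] (G : SimpleGraph W) [DecidableRel G.Adj]
    (r : ℕ) (hr : 1 ≤ r) :
    (2 * (G.edgeFinset.card : ℝ) / Fintype.card W) ^ r * Fintype.card W ≤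
      ∑ v : W, (G.degree v : ℝ) ^ r := by
  apply mean_pow (fun v => (G.degree v : ℝ)) (fun _ => by positivity) _ _ r hr
  have h := G.sum_degrees_eq_twice_card_edges
  have hn : (Fintype.card W : ℝ) ≠ 0 := by positivity
  rw [div_mul_cancel₀ _ hn]
  exact_mod_cast h

theorem dens_le_one {W : Type} [Fintype W] [Nonempty W] (G : SimpleGraph W) [DecidableRel G.Adj] :
    2 * (G.edgeFinset.card : ℝ) / (Fintype.card W : ℝ) ^ 2 ≤ 1 := by
  have h := G.sum_degrees_eq_twice_card_edges
  have h2 : ∑ v : W, G.degree v ≤ Fintype.card W * Fintype.card W := by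
    have := Finset.sum_le_card_nsmul Finset.univ (fun v => G.degree v) (Fintype.card W)
      (fun v _ => (G.degree_lt_card_verts v).le)
    simpa using this
  rw [div_le_one (by positivity), sq]
  rw [h] at h2
  exact_mod_cast h2

theorem final_arith (n ε D q : ℝ) (r s k E : ℕ) (hn : 0 ≤ n) (hε : 0 ≤ ε) (hq0 : 0 ≤ q)
    (hq1 : q ≤ 1) (hqD : n * q ^ r ≤ D) (hE : r * s ≤ E) :
    ε ^ s / 2 ^ k * n ^ (r + s) * q ^ E ≤ n ^ r * (ε * D) ^ s / 2 ^ k := by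
  calc ε ^ s / 2 ^ k * n ^ (r + s) * q ^ E
      ≤ ε ^ s / 2 ^ k * n ^ (r + s) * q ^ (r * s) := by
        have := pow_le_pow_of_le_one hq0 hq1 hE
        gcongr
    _ = n ^ r * (ε ^ s * (n * q ^ r) ^ s) / 2 ^ k := by
        rw [mul_pow n, ← pow_mul, pow_add]; ring
    _ ≤ n ^ r * (ε ^ s * D ^ s) / 2 ^ k := by gcongr
    _ = n ^ r * (ε * D) ^ s / 2 ^ k := by rw [mul_pow]

set_option maxHeartbeats 1000000 in
theorem blowup_of_tree_count {VH : Type} [Fintype VH] [DecidableEq VH]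
    (H : SimpleGraph VH) (r t m : ℕ) (hr : 1 ≤ r) (hrt : r ≤ t)
    (R : BlockRep H m) (hB0 : (R.B 0).card = r)
    (hBt : ∀ i : Fin (m + 1), 1 ≤ (i : ℕ) → (R.B i).card = t)
    (hPr : ∀ i : Fin (m + 1), 2 ≤ (i : ℕ) → (R.P i).card = r) :
    ∃ c c' C : ℝ, 0 < c ∧ 0 < c' ∧ 0 < C ∧
      (∀ (W : Type) [Fintype W] [Nonempty W] (G : SimpleGraph W) [DecidableRel G.Adj],
        (∑ v : W, (G.degree v : ℝ) ^ r) ≥ c * (Fintype.card W : ℝ) ^ r →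
          c' * (Fintype.card W : ℝ) ^ (Fintype.card VH) *
              (2 * (G.edgeFinset.card : ℝ) / (Fintype.card W : ℝ) ^ 2) ^
                (Nat.card H.edgeSet) ≤
            (Nat.card {f : H →g G // Function.Injective f} : ℝ)) ∧
      (∀ (W : Type) [Fintype W] [Nonempty W] (G : SimpleGraph W) [DecidableRel G.Adj],
        (∀ f : H →g G, ¬ Function.Injective f) →
          (G.edgeFinset.card : ℝ) ≤ C * (Fintype.card W : ℝ) ^ ((2 : ℝ) - 1 / r)) := by
  obtain ⟨β, e, p, hβ, he, hp, hep, hp1, hs, hcard, hh, hadj⟩ :=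
    block_data H r t m hr R hB0 hBt hPr
  have hm := R.hm
  have hE := edge_lower H r t m β e p hβ hm he hp hep hs hh hadj
  have hmR : (1 : ℝ) ≤ m := by exact_mod_cast hm
  obtain ⟨δ, hδdef⟩ : ∃ δ : ℝ, δ = 1 / (4 * m) := ⟨_, rfl⟩
  have hδ : 0 < δ := by rw [hδdef]; positivity
  have hmδ : m * δ ≤ 1 / 4 := by
    rw [hδdef]; apply le_of_eq; field_simp
  obtain ⟨A, hAdef⟩ : ∃ A : ℝ, A = (1 + 1 / δ) ^ m := ⟨_, rfl⟩
  have hA1 : 1 ≤ A := by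
    rw [hAdef]; apply one_le_pow₀
    have : 0 < 1 / δ := by positivity
    linarith
  obtain ⟨ε, hεdef⟩ : ∃ ε : ℝ, ε = 1 / (4 * A) := ⟨_, rfl⟩
  have hε : 0 < ε := by rw [hεdef]; positivity
  have hε1 : ε ≤ 1 := by
    rw [hεdef, div_le_one (by positivity)]; linarith
  obtain ⟨c, hcdef⟩ : ∃ c : ℝ, c = 8 * r ^ 2 * A +
    4 * ((t : ℝ) ^ 2 + t * Fintype.card VH) / ε + 1 := ⟨_, rfl⟩
  have hc1 : 1 ≤ c := by
    rw [hcdef]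
    have : 0 ≤ 8 * (r : ℝ) ^ 2 * A + 4 * ((t : ℝ) ^ 2 + t * Fintype.card VH) / ε := by positivity
    linarith
  have hcA : 8 * r ^ 2 * A ≤ c := by
    rw [hcdef]
    have : 0 ≤ 4 * ((t : ℝ) ^ 2 + t * Fintype.card VH) / ε := by positivity
    linarith
  have hcε : 4 * ((t : ℝ) ^ 2 + t * Fintype.card VH) ≤ ε * c := by
    have h1 : 4 * ((t : ℝ) ^ 2 + t * Fintype.card VH) / ε ≤ c := by
      rw [hcdef]
      have : 0 ≤ 8 * (r : ℝ) ^ 2 * A := by positivity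
      linarith
    rw [div_le_iff₀ hε] at h1
    linarith
  have hmain : ∀ (W : Type) [Fintype W] [Nonempty W] (G : SimpleGraph W) [DecidableRel G.Adj],
        (∑ v : W, (G.degree v : ℝ) ^ r) ≥ c * (Fintype.card W : ℝ) ^ r →
          ε ^ (t * m) / 2 ^ (m + 1) * (Fintype.card W : ℝ) ^ (Fintype.card VH) *
              (2 * (G.edgeFinset.card : ℝ) / (Fintype.card W : ℝ) ^ 2) ^
                (Nat.card H.edgeSet) ≤
            (Nat.card {f : H →g G // Function.Injective f} : ℝ) := by
    intro W _ _ G _ hS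
    obtain ⟨w0⟩ := ‹Nonempty W›
    haveI : Nonempty W := ⟨w0⟩
    have hn : (0 : ℝ) < Fintype.card W := by positivity
    set n : ℝ := (Fintype.card W : ℝ) with hndef
    obtain ⟨D, hDdef⟩ : ∃ D : ℝ, D = (∑ v : W, (G.degree v : ℝ) ^ r) / n ^ r := ⟨_, rfl⟩
    have hcD : c ≤ D := by
      rw [hDdef, le_div_iff₀ (by positivity)]; exact hS
    have hD0 : 0 < D := by linarith
    have hDsum : ∑ x : Fin r → W, ((cN G x).card : ℝ) = D * Fintype.card (Fin r → W) := by
      have h1 : ∑ x : Fin r → W, ((cN G x).card : ℝ) = ∑ v : W, (G.degree v : ℝ) ^ r := by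
        exact_mod_cast sum_cN G r
      rw [h1, Fintype.card_fun, Fintype.card_fin, Nat.cast_pow, hDdef, ← hndef,
        div_mul_cancel₀ _ (by positivity)]
    have hη : (1 + 1 / δ) ^ m * (ε + 2 * r ^ 2 / D) ≤ 1 / 2 := by
      rw [← hAdef, mul_add]
      have h1 : A * ε = 1 / 4 := by rw [hεdef]; field_simp
      have h2 : A * (2 * r ^ 2 / D) ≤ 1 / 4 := by
        rw [← mul_div_assoc, div_le_iff₀ hD0]; linarith
      linarith
    have hτ : 4 * ((t : ℝ) ^ 2 + t * Fintype.card VH) ≤ ε * D :=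
      hcε.trans (by gcongr)
    have hb := partE_bound G r t m D ε δ β e p w0 hr hrt hm he hp hep hp1 hs hcard hδ hmδ hε hε1
      hD0 hτ hη hDsum (m - 1) (by omega)
    have em1 : m - 1 + 1 = m := by omega
    have em2 : m - 1 + 2 = m + 1 := by omega
    rw [em1, em2, ← hndef] at hb
    have hhom := partE_hom H G r m (ε * D) δ β e p w0 hβ hadj
    have hhom' : ((partE G r m (ε * D) δ β e p w0 m).card : ℝ) ≤
      (Nat.card {f : H →g G // Function.Injective f} : ℝ) := by exact_mod_cast hhom
    refine le_trans ?_ (hb.trans hhom')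
    set q : ℝ := 2 * (G.edgeFinset.card : ℝ) / n ^ 2 with hq
    have hq0 : 0 ≤ q := by positivity
    have hq1 : q ≤ 1 := dens_le_one G
    have hqD : n * q ^ r ≤ D := by
      have h1 := deg_mean G r hr
      rw [hDdef, le_div_iff₀ (by positivity)]
      refine le_trans (le_of_eq ?_) h1
      rw [← hndef, mul_assoc, ← mul_pow, mul_comm]
      congr 2
      rw [hq]; field_simp
    rw [hh]
    exact final_arith n ε D q r (t * m) (m + 1) _ hn.le hε.le hq0 hq1 hqD hE
  refine ⟨c, ε ^ (t * m) / 2 ^ (m + 1), c, by linarith, by positivity, by linarith, hmain, ?_⟩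
  intro W _ _ G _ hno
  have hn : (0 : ℝ) < Fintype.card W := by positivity
  have hcpos : 0 < c := by linarith
  by_cases hS : (∑ v : W, (G.degree v : ℝ) ^ r) ≥ c * (Fintype.card W : ℝ) ^ r
  · have h1 := hmain W G hS
    haveI : IsEmpty {f : H →g G // Function.Injective f} := ⟨fun f => hno f.1 f.2⟩
    rw [Nat.card_of_isEmpty (α := {f : H →g G // Function.Injective f}), Nat.cast_zero] at h1
    rcases Nat.eq_zero_or_pos G.edgeFinset.card with h0 | h0
    · rw [h0, Nat.cast_zero]; positivity
    · exfalso
      have : (0 : ℝ) < G.edgeFinset.card := by exact_mod_cast h0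
      have h2 : 0 < ε ^ (t * m) / 2 ^ (m + 1) * (Fintype.card W : ℝ) ^ (Fintype.card VH) *
              (2 * (G.edgeFinset.card : ℝ) / (Fintype.card W : ℝ) ^ 2) ^
                (Nat.card H.edgeSet) := by positivity
      linarith
  · push Not at hS
    have h1 := (deg_mean G r hr).trans hS.le
    set n : ℝ := (Fintype.card W : ℝ) with hndef
    set E : ℝ := (G.edgeFinset.card : ℝ) with hEdef
    have hE0 : 0 ≤ E := by positivity
    have h2 : E ^ r * n ≤ c * n ^ (2 * r) := by
      have h3 : (2 * E / n) ^ r * n * n ^ r ≤ c * n ^ r * n ^ r := by gcongr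
      have h4 : (2 * E / n) ^ r * n * n ^ r = (2 * E) ^ r * n := by
        rw [div_pow]; field_simp
      have h5 : c * n ^ r * n ^ r = c * n ^ (2 * r) := by rw [two_mul, pow_add]; ring
      rw [h4, h5] at h3
      refine le_trans ?_ h3
      gcongr
      linarith
    have h6 : (c * n ^ ((2 : ℝ) - 1 / r)) ^ r * n = c ^ r * n ^ (2 * r) := by
      have hrR : (r : ℝ) ≠ 0 := by positivity
      rw [mul_pow, ← Real.rpow_natCast (n ^ ((2 : ℝ) - 1 / r)) r, ← Real.rpow_mul hn.le, mul_assoc]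
      congr 1
      have : ((2 : ℝ) - 1 / r) * r = ((2 * r : ℕ) : ℝ) - 1 := by push_cast; field_simp
      rw [this, Real.rpow_sub_one hn.ne', Real.rpow_natCast, div_mul_cancel₀ _ hn.ne']
    have h7 : c ≤ c ^ r := le_self_pow₀ hc1 (by omega)
    have h8 : E ^ r * n ≤ (c * n ^ ((2 : ℝ) - 1 / r)) ^ r * n := by
      rw [h6]; refine h2.trans ?_; gcongr
    have h9 := le_of_mul_le_mul_right h8 hn
    exact (pow_le_pow_iff_left₀ hE0 (by positivity) (by omega)).1 h9
end
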